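/- Let c = 2π√(5/12). As the positive integer n → ∞, π(n,n) ~ (5/(2^5·3)) · e^{c√n}/n^{3/2}; that is, the ratio π(n,n) / [ (5/96) · e^{c√n}/n^{3/2} ] tends to 1. -/

import Mathlib

open Finset

/-- A pair of sequences of parts is *steadily decreasing* if
`min (a i) (b i) ≥ max (a (i+1)) (b (i+1))` for all `i`. -/
noncomputable def SteadilyDecreasing (a b : ℕ → ℕ) : Prop :=
  ∀ i, max (a (i + 1)) (b (i + 1)) ≤ min (a i) (b i)

/-- `bipartitePi m n` is the number of pairs of partitions (given as non-increasing,
finitely supported sequences) of the bipartite number `(m, n)` with steadily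
decreasing parts. -/
noncomputable def bipartitePi (m n : ℕ) : ℕ :=
  Nat.card {p : (ℕ →₀ ℕ) × (ℕ →₀ ℕ) //
    (∀ i, p.1 (i + 1) ≤ p.1 i) ∧ (∀ i, p.2 (i + 1) ≤ p.2 i) ∧
    SteadilyDecreasing p.1 p.2 ∧
    (p.1.sum fun _ x => x) = m ∧ (p.2.sum fun _ x => x) = n}

/-- The partition function `p n`. -/
noncomputable def partitionCount (n : ℕ) : ℕ := Nat.card (Nat.Partition n)

/-- The partition function extended to the integers, with `p r = 0` for `r < 0`. -/
noncomputable def partitionCountInt (r : ℤ) : ℕ := if 0 ≤ r then partitionCount r.toNat else 0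

/-- The cubic partition function `c n`, counting partitions of `n` in which even
parts come in two colors (equivalently, pairs of a partition together with a
partition into even parts, of total size `n`). -/
noncomputable def cubicPartition (n : ℕ) : ℕ :=
  Nat.card {p : Multiset ℕ × Multiset ℕ //
    (∀ i ∈ p.1, 0 < i) ∧ (∀ i ∈ p.2, 0 < i ∧ Even i) ∧ p.1.sum + p.2.sum = n}

/-- The Andrews–Garvan crank of a partition: the largest part if there are no ones,
and otherwise the number of parts larger than the number of ones minus the number of
ones. -/
noncomputable def crank {n : ℕ} (l : n.Partition) : ℤ :=
  if l.parts.count 1 = 0 then (l.parts.sup : ℤ)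
  else ((l.parts.filter fun p => l.parts.count 1 < p).card : ℤ) - l.parts.count 1

/-- `crankM m n` is the crank counting function `M(m, n)`: the number of partitions
of `n` with crank `m`, with the standard convention at `n = 1`
(`M(0,1) = -1`, `M(±1,1) = 1`, `M(m,1) = 0` otherwise). -/
noncomputable def crankM (m : ℤ) (n : ℕ) : ℤ :=
  if n = 1 then (if m = 0 then -1 else if m.natAbs = 1 then 1 else 0)
  else (Nat.card {l : n.Partition // crank l = m} : ℤ)

/-- `alphaBip s k = Σ_{ℓ ≥ 0} (-1)^ℓ p(k - ℓ(ℓ+1)/2 - ℓ s)`. -/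
noncomputable def alphaBip (s k : ℕ) : ℤ :=
  ∑' ℓ : ℕ, (-1 : ℤ) ^ ℓ *
    (partitionCountInt ((k : ℤ) - ℓ * (ℓ + 1) / 2 - ℓ * s) : ℤ)

/-- `Dbip m n = π(m,n) - π(m-1,n)`, with `π(-1,n) := 0`. -/
noncomputable def Dbip (m n : ℕ) : ℤ :=
  (bipartitePi m n : ℤ) - if m = 0 then 0 else (bipartitePi (m - 1) n : ℤ)

/-!
A pair of partitions with steadily decreasing parts is encoded by its gaps
`(α_i - M_{i+1}, β_i - M_{i+1})`, `M_i = max α_i β_i`, which are arbitrary and independent from row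
to row; hence `∑ π(m, n) x^m y^n` is an infinite product, namely
`1 / ((x; q)_∞ (y; q)_∞ φ(q²))` with `q = x y`, where `φ(q) = (q; q)_∞`. Expanding the first two
factors by Euler's identity and extracting the diagonal gives
`∑ π(n, n) q^n = T(q) / (φ(q)² φ(q²))` with the false theta function
`T(q) = ∑_{k ≥ 0} (-1)^k q^(k(k+1)/2)`.

The asymptotics then follow from Wright's form of the circle method. As `q = e^{-s} → 1` in the
sector `|im s| ≤ re s`, the transformation law of the Dedekind eta function describes `φ(q)` and
`φ(q²)`, while `T(q) → 1/2` by summing the alternating series through second differences; so the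
generating function is asymptotic to `s^(3/2) e^{5π²/(12 s)} / (4 π^(3/2))`. On the rest of the
circle it is exponentially smaller, since `|φ(q)|⁻¹` falls short of `φ(|q|)⁻¹` there.
-/

open Filter Topology

/-! ### q-Pochhammer symbols and Euler's identities -/

section QSeries

/-- The finite q-Pochhammer symbol `(a; q)_n`. -/
noncomputable def qPochhammer (a q : ℂ) (n : ℕ) : ℂ := ∏ i ∈ range n, (1 - a * q ^ i)

/-- The infinite q-Pochhammer symbol `(a; q)_∞`. -/
noncomputable def qPochhammerInf (a q : ℂ) : ℂ := ∏' i : ℕ, (1 - a * q ^ i)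

/-- Euler's function `φ(q) = (q; q)_∞`, the reciprocal of the generating function of partitions. -/
noncomputable def eulerFunction (q : ℂ) : ℂ := ∏' n : ℕ, (1 - q ^ (n + 1))

/-- The false theta function `∑ (-1)^k q^(k(k+1)/2)`, summed over `k ≥ 0` only. -/
noncomputable def falseTheta (q : ℂ) : ℂ := ∑' k : ℕ, (-1) ^ k * q ^ ((k + 1).choose 2)

variable {a q z : ℂ}

lemma norm_pow_lt_one {n : ℕ} (hq : ‖q‖ < 1) (hn : n ≠ 0) : ‖q ^ n‖ < 1 := by
  rw [norm_pow]
  exact pow_lt_one₀ (norm_nonneg _) hq hn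

lemma norm_mul_lt_one (ha : ‖a‖ < 1) (hq : ‖q‖ < 1) : ‖a * q‖ < 1 := by
  rw [norm_mul]
  exact mul_lt_one_of_nonneg_of_lt_one_left (norm_nonneg _) ha hq.le

lemma norm_mul_pow_lt_one (ha : ‖a‖ < 1) (hq : ‖q‖ < 1) (n : ℕ) : ‖a * q ^ n‖ < 1 := by
  rw [norm_mul, norm_pow]
  exact mul_lt_one_of_nonneg_of_lt_one_left (norm_nonneg _) ha
    (pow_le_one₀ (norm_nonneg _) hq.le)

lemma one_sub_ne_zero_of_norm_lt_one (hz : ‖z‖ < 1) : 1 - z ≠ 0 := by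
  intro h
  simp [← sub_eq_zero.mp h] at hz

@[simp]
lemma qPochhammer_zero (a q : ℂ) : qPochhammer a q 0 = 1 := prod_range_zero _

lemma qPochhammer_succ (a q : ℂ) (n : ℕ) :
    qPochhammer a q (n + 1) = qPochhammer a q n * (1 - a * q ^ n) :=
  prod_range_succ _ n

lemma qPochhammer_add (a q : ℂ) (m n : ℕ) :
    qPochhammer a q (m + n) = qPochhammer a q m * qPochhammer (a * q ^ m) q n := by
  simp only [qPochhammer, prod_range_add, pow_add, mul_assoc]

lemma qPochhammer_ne_zero (ha : ‖a‖ < 1) (hq : ‖q‖ < 1) (n : ℕ) : qPochhammer a q n ≠ 0 :=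
  prod_ne_zero_iff.mpr fun i _ => one_sub_ne_zero_of_norm_lt_one (norm_mul_pow_lt_one ha hq i)

lemma summable_norm_mul_pow (a : ℂ) (hq : ‖q‖ < 1) : Summable fun i : ℕ => ‖-(a * q ^ i)‖ := by
  simpa using (summable_geometric_of_lt_one (norm_nonneg q) hq).mul_left ‖a‖

lemma tendsto_qPochhammer (a : ℂ) (hq : ‖q‖ < 1) :
    Tendsto (qPochhammer a q) atTop (𝓝 (qPochhammerInf a q)) := by
  have h := (multipliable_one_add_of_summable (summable_norm_mul_pow a hq)).hasProd
  simp only [← sub_eq_add_neg] at h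
  exact h.tendsto_prod_nat

lemma qPochhammerInf_ne_zero (ha : ‖a‖ < 1) (hq : ‖q‖ < 1) : qPochhammerInf a q ≠ 0 := by
  have h := tprod_one_add_ne_zero_of_summable (f := fun i : ℕ => -(a * q ^ i))
    (fun i => by
      rw [← sub_eq_add_neg]
      exact one_sub_ne_zero_of_norm_lt_one (norm_mul_pow_lt_one ha hq i))
    (summable_norm_mul_pow a hq)
  simp only [← sub_eq_add_neg] at h
  exact h

lemma eulerFunction_eq_qPochhammerInf (q : ℂ) : eulerFunction q = qPochhammerInf q q := by
  simp only [eulerFunction, qPochhammerInf, pow_succ']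

lemma eulerFunction_ne_zero (hq : ‖q‖ < 1) : eulerFunction q ≠ 0 := by
  rw [eulerFunction_eq_qPochhammerInf]
  exact qPochhammerInf_ne_zero hq hq

lemma tendsto_qPochhammer_self (hq : ‖q‖ < 1) :
    Tendsto (qPochhammer q q) atTop (𝓝 (eulerFunction q)) := by
  rw [eulerFunction_eq_qPochhammerInf]
  exact tendsto_qPochhammer q hq

lemma qPochhammer_self_mul_qPochhammerInf (hq : ‖q‖ < 1) (k : ℕ) :
    qPochhammer q q k * qPochhammerInf (q ^ (k + 1)) q = eulerFunction q := by
  have h := (tendsto_qPochhammer (q ^ (k + 1)) hq).const_mul (qPochhammer q q k)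
  simp only [pow_succ', ← qPochhammer_add] at h
  refine tendsto_nhds_unique ?_
    ((tendsto_qPochhammer_self hq).comp (tendsto_add_atTop_nat k))
  simpa only [pow_succ', Function.comp_def, add_comm] using h

lemma exists_norm_qPochhammer_inv_le (ha : ‖a‖ < 1) (hq : ‖q‖ < 1) :
    ∃ C : ℝ, ∀ n, ‖(qPochhammer a q n)⁻¹‖ ≤ C := by
  have h := (tendsto_qPochhammer a hq).inv₀ (qPochhammerInf_ne_zero ha hq)
  obtain ⟨C, hC⟩ := (Metric.isBounded_range_of_tendsto _ h).exists_norm_le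
  exact ⟨C, fun n => hC _ ⟨n, rfl⟩⟩

/-- The `k`-th coefficient `1 / (q; q)_k` of Euler's series for `1 / (z; q)_∞`. -/
noncomputable def eulerCoeff (q : ℂ) (k : ℕ) : ℂ := (qPochhammer q q k)⁻¹

/-- The `k`-th coefficient `(-1)^k q^(k(k-1)/2) / (q; q)_k` of Euler's series for `(z; q)_∞`. -/
noncomputable def eulerSignedCoeff (q : ℂ) (k : ℕ) : ℂ :=
  (-1) ^ k * q ^ k.choose 2 * eulerCoeff q k

lemma choose_two_succ (k : ℕ) : (k + 1).choose 2 = k + k.choose 2 := by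
  simp [Nat.choose_succ_succ' k 1]

lemma eulerCoeff_succ (hq : ‖q‖ < 1) (k : ℕ) :
    eulerCoeff q (k + 1) * (1 - q ^ (k + 1)) = eulerCoeff q k := by
  have h := one_sub_ne_zero_of_norm_lt_one (norm_pow_lt_one hq k.succ_ne_zero)
  rw [eulerCoeff, eulerCoeff, qPochhammer_succ, ← pow_succ', mul_inv, inv_mul_cancel_right₀ h]

lemma eulerSignedCoeff_succ (hq : ‖q‖ < 1) (k : ℕ) :
    eulerSignedCoeff q (k + 1) * (1 - q ^ (k + 1)) = -(q ^ k * eulerSignedCoeff q k) := by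
  rw [eulerSignedCoeff, eulerSignedCoeff, choose_two_succ, ← eulerCoeff_succ hq k]
  ring

lemma norm_neg_one_pow_mul_pow_le_one (hq : ‖q‖ < 1) (k n : ℕ) : ‖(-1) ^ k * q ^ n‖ ≤ 1 := by
  simpa using pow_le_one₀ (norm_nonneg q) hq.le

lemma exists_norm_eulerCoeff_le (hq : ‖q‖ < 1) :
    ∃ C : ℝ, (∀ k, ‖eulerCoeff q k‖ ≤ C) ∧ ∀ k, ‖eulerSignedCoeff q k‖ ≤ C := by
  obtain ⟨C, hC⟩ := exists_norm_qPochhammer_inv_le hq hq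
  refine ⟨C, hC, fun k => ?_⟩
  rw [eulerSignedCoeff, norm_mul]
  exact (mul_le_of_le_one_left (norm_nonneg _) (norm_neg_one_pow_mul_pow_le_one hq _ _)).trans
    (hC k)

section PowerSeries

variable {c : ℕ → ℂ} {C : ℝ}

lemma summable_mul_pow_of_norm_le (hc : ∀ k, ‖c k‖ ≤ C) (hz : ‖z‖ < 1) :
    Summable fun k : ℕ => c k * z ^ k := by
  refine Summable.of_norm_bounded
    ((summable_geometric_of_lt_one (norm_nonneg _) hz).mul_left C) fun k => ?_
  rw [norm_mul, norm_pow]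
  gcongr
  exact hc k

lemma tendsto_tsum_mul_geometric_pow (hc : ∀ k, ‖c k‖ ≤ C) (hz : ‖z‖ < 1) (hq : ‖q‖ < 1) :
    Tendsto (fun N : ℕ => ∑' k, c k * (z * q ^ N) ^ k) atTop (𝓝 (c 0)) := by
  have hlim : c 0 = ∑' k, c k * 0 ^ k := by
    rw [tsum_eq_single 0 (fun k hk => by simp [hk])]
    simp
  rw [hlim]
  refine tendsto_tsum_of_dominated_convergence (bound := fun k => C * ‖z‖ ^ k)
    ((summable_geometric_of_lt_one (norm_nonneg _) hz).mul_left C) (fun k => ?_)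
    (Eventually.of_forall fun N k => ?_)
  · have h := (tendsto_pow_atTop_nhds_zero_of_norm_lt_one hq).const_mul z
    rw [mul_zero] at h
    exact (h.pow k).const_mul (c k)
  · have hC : 0 ≤ C := (norm_nonneg _).trans (hc 0)
    rw [norm_mul, norm_pow, norm_mul, norm_pow]
    gcongr
    · exact hc k
    · exact mul_le_of_le_one_right (norm_nonneg _) (pow_le_one₀ (norm_nonneg _) hq.le)

end PowerSeries

lemma tsum_eulerCoeff_mul_one_sub (hz : ‖z‖ < 1) (hq : ‖q‖ < 1) :
    (∑' k, eulerCoeff q k * z ^ k) * (1 - z) = ∑' k, eulerCoeff q k * (z * q) ^ k := by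
  obtain ⟨C, hC, -⟩ := exists_norm_eulerCoeff_le hq
  have hs := summable_mul_pow_of_norm_le hC hz
  have hs' := summable_mul_pow_of_norm_le hC (norm_mul_lt_one hz hq)
  suffices ∑' k, eulerCoeff q k * z ^ k - ∑' k, eulerCoeff q k * (z * q) ^ k =
      z * ∑' k, eulerCoeff q k * z ^ k by linear_combination this
  rw [← hs.tsum_sub hs', (hs.sub hs').tsum_eq_zero_add, ← tsum_mul_left]
  simp only [pow_zero, sub_self, zero_add]
  refine tsum_congr fun k => ?_
  linear_combination z ^ (k + 1) * eulerCoeff_succ hq k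

lemma tsum_eulerSignedCoeff_eq_one_sub_mul (hz : ‖z‖ < 1) (hq : ‖q‖ < 1) :
    ∑' k, eulerSignedCoeff q k * z ^ k =
      (1 - z) * ∑' k, eulerSignedCoeff q k * (z * q) ^ k := by
  obtain ⟨C, -, hC⟩ := exists_norm_eulerCoeff_le hq
  have hs := summable_mul_pow_of_norm_le hC hz
  have hs' := summable_mul_pow_of_norm_le hC (norm_mul_lt_one hz hq)
  suffices ∑' k, eulerSignedCoeff q k * z ^ k - ∑' k, eulerSignedCoeff q k * (z * q) ^ k =
      -z * ∑' k, eulerSignedCoeff q k * (z * q) ^ k by linear_combination this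
  rw [← hs.tsum_sub hs', (hs.sub hs').tsum_eq_zero_add, ← tsum_mul_left]
  simp only [pow_zero, sub_self, zero_add]
  refine tsum_congr fun k => ?_
  linear_combination z ^ (k + 1) * eulerSignedCoeff_succ hq k

theorem tsum_eulerCoeff_mul_pow (hz : ‖z‖ < 1) (hq : ‖q‖ < 1) :
    ∑' k, eulerCoeff q k * z ^ k = (qPochhammerInf z q)⁻¹ := by
  have hiter (N : ℕ) : (∑' k, eulerCoeff q k * z ^ k) * qPochhammer z q N =
      ∑' k, eulerCoeff q k * (z * q ^ N) ^ k := by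
    induction N with
    | zero => simp
    | succ N ih =>
      rw [qPochhammer_succ, ← mul_assoc, ih,
        tsum_eulerCoeff_mul_one_sub (norm_mul_pow_lt_one hz hq N) hq, mul_assoc z, ← pow_succ]
  obtain ⟨C, hC, -⟩ := exists_norm_eulerCoeff_le hq
  have hlim := tendsto_tsum_mul_geometric_pow hC hz hq
  simp only [← hiter] at hlim
  refine eq_inv_of_mul_eq_one_left (tendsto_nhds_unique
    ((tendsto_qPochhammer z hq).const_mul _) ?_)
  simpa [eulerCoeff] using hlim

theorem tsum_eulerSignedCoeff_mul_pow (hz : ‖z‖ < 1) (hq : ‖q‖ < 1) :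
    ∑' k, eulerSignedCoeff q k * z ^ k = qPochhammerInf z q := by
  have hiter (N : ℕ) : ∑' k, eulerSignedCoeff q k * z ^ k =
      qPochhammer z q N * ∑' k, eulerSignedCoeff q k * (z * q ^ N) ^ k := by
    induction N with
    | zero => simp
    | succ N ih =>
      rw [qPochhammer_succ, mul_assoc, pow_succ, ← mul_assoc z, ih,
        tsum_eulerSignedCoeff_eq_one_sub_mul (norm_mul_pow_lt_one hz hq N) hq]
  obtain ⟨C, -, hC⟩ := exists_norm_eulerCoeff_le hq
  have hlim := (tendsto_qPochhammer z hq).mul (tendsto_tsum_mul_geometric_pow hC hz hq)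
  simp only [← hiter] at hlim
  simpa [eulerSignedCoeff, eulerCoeff] using tendsto_nhds_unique tendsto_const_nhds hlim

lemma summable_eulerCoeff_mul_eulerSignedCoeff (hq : ‖q‖ < 1) :
    Summable fun p : ℕ × ℕ =>
      eulerCoeff q p.1 * q ^ p.1 * (eulerSignedCoeff q p.2 * (q ^ (p.1 + 1)) ^ p.2) := by
  obtain ⟨C, hC, hC'⟩ := exists_norm_eulerCoeff_le hq
  have hC₀ : 0 ≤ C := (norm_nonneg _).trans (hC 0)
  have hgeom := (summable_geometric_of_lt_one (norm_nonneg _) hq).mul_left C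
  refine Summable.of_norm_bounded (hgeom.mul_of_nonneg hgeom (fun _ => by positivity)
    (fun _ => by positivity)) ?_
  rintro ⟨k, j⟩
  have hkj : ‖q‖ ^ ((k + 1) * j) ≤ ‖q‖ ^ j :=
    pow_le_pow_of_le_one (norm_nonneg _) hq.le (Nat.le_mul_of_pos_left j k.succ_pos)
  simp only [norm_mul, norm_pow, ← pow_mul]
  gcongr
  exacts [hC k, hC' j]

/-- Expand `1 / (q; q)_k = (q^(k+1); q)_∞ / φ(q)` in each summand by Euler's series in `q^(k+1)`;
after exchanging the sums, the inner sum is Euler's series for `1 / (q^(j+1); q)_∞`. -/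
theorem tsum_eulerCoeff_sq_mul_pow (hq : ‖q‖ < 1) :
    ∑' k, eulerCoeff q k ^ 2 * q ^ k = falseTheta q / eulerFunction q ^ 2 := by
  have hφ := eulerFunction_ne_zero hq
  have hpow (k : ℕ) : ‖q ^ (k + 1)‖ < 1 := norm_pow_lt_one hq k.succ_ne_zero
  have hInf (k : ℕ) : qPochhammerInf (q ^ (k + 1)) q = eulerFunction q * eulerCoeff q k := by
    rw [← qPochhammer_self_mul_qPochhammerInf hq k, eulerCoeff, mul_right_comm,
      mul_inv_cancel₀ (qPochhammer_ne_zero hq hq k), one_mul]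
  have hrow (k : ℕ) : ∑' j, eulerCoeff q k * q ^ k *
      (eulerSignedCoeff q j * (q ^ (k + 1)) ^ j) =
        eulerFunction q * (eulerCoeff q k ^ 2 * q ^ k) := by
    rw [tsum_mul_left, tsum_eulerSignedCoeff_mul_pow (hpow k) hq, hInf]
    ring
  have hcol (j : ℕ) : ∑' k, eulerCoeff q k * q ^ k *
      (eulerSignedCoeff q j * (q ^ (k + 1)) ^ j) =
        (eulerFunction q)⁻¹ * ((-1) ^ j * q ^ (j + 1).choose 2) := by
    have hterm (k : ℕ) : eulerCoeff q k * q ^ k * (eulerSignedCoeff q j * (q ^ (k + 1)) ^ j) =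
        eulerSignedCoeff q j * q ^ j * (eulerCoeff q k * (q ^ (j + 1)) ^ k) := by ring
    simp only [hterm]
    rw [tsum_mul_left, tsum_eulerCoeff_mul_pow (hpow j) hq, hInf, choose_two_succ,
      eulerSignedCoeff, eulerCoeff]
    have := qPochhammer_ne_zero hq hq j
    field_simp
    ring
  have hcomm := (summable_eulerCoeff_mul_eulerSignedCoeff hq).tsum_comm (f := fun k j =>
    eulerCoeff q k * q ^ k * (eulerSignedCoeff q j * (q ^ (k + 1)) ^ j))
  simp only [hrow, hcol, tsum_mul_left] at hcomm
  rw [falseTheta, eq_div_iff (pow_ne_zero 2 hφ)]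
  linear_combination (-eulerFunction q) * hcomm +
    (∑' j : ℕ, (-1) ^ j * q ^ (j + 1).choose 2) * mul_inv_cancel₀ hφ

end QSeries

/-! ### Sums over finitely supported functions -/

section FinsuppSums

variable {𝕜 M : Type*} [RCLike 𝕜]

lemma hasSum_fin_prod {n : ℕ} {w : Fin n → M → 𝕜} (hw : ∀ i, Summable (w i)) :
    HasSum (fun f : Fin n → M => ∏ i, w i (f i)) (∏ i, ∑' z, w i z) := by
  induction n with
  | zero => simp
  | succ n ih =>
    have htail := ih (w := fun i => w i.succ) fun i => hw i.succ
    have hsum := summable_mul_of_summable_norm (hw 0).norm htail.summable.norm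
    rw [← (Fin.consEquiv fun _ => M).hasSum_iff, Fin.prod_univ_succ]
    simpa [Function.comp_def, Fin.prod_univ_succ] using (hw 0).hasSum.mul htail hsum

variable [Zero M]

lemma hasSum_indicator_finsupp_prod {w : ℕ → M → 𝕜} (hw₀ : ∀ j, w j 0 = 1)
    (hw : ∀ j, Summable (w j)) (N : ℕ) :
    HasSum ({f : ℕ →₀ M | f.support ⊆ range N}.indicator fun f => f.prod w)
      (∏ j ∈ range N, ∑' z, w j z) := by
  let extend (g : Fin N → M) : ℕ →₀ M :=
    (Finsupp.equivFunOnFinite.symm g).embDomain Fin.valEmbedding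
  have hinj : Function.Injective extend :=
    (Finsupp.embDomain_injective _).comp Finsupp.equivFunOnFinite.symm.injective
  have hsupp (g : Fin N → M) : (extend g).support ⊆ range N := by
    intro j hj
    obtain ⟨i, -, rfl⟩ := mem_map.mp ((Finsupp.support_embDomain _ _).subset hj)
    exact mem_range.mpr i.2
  have hsurj (f : ℕ →₀ M) (hf : f.support ⊆ range N) : extend (fun i => f i) = f := by
    ext j
    by_cases hj : j < N
    · exact Finsupp.embDomain_apply_self Fin.valEmbedding _ (⟨j, hj⟩ : Fin N)
    · rw [Finsupp.notMem_support_iff.mp fun h => hj (mem_range.mp (hsupp _ h)),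
        Finsupp.notMem_support_iff.mp fun h => hj (mem_range.mp (hf h))]
  have hprod (g : Fin N → M) : (extend g).prod w = ∏ i : Fin N, w i (g i) := by
    simp only [extend]
    rw [Finsupp.prod_embDomain, Finsupp.prod_fintype _ _ fun i => hw₀ _]
    simp
  rw [← hinj.hasSum_iff fun f hf => Set.indicator_of_notMem (fun h => hf ⟨_, hsurj f h⟩) _,
    ← Fin.prod_univ_eq_prod_range (fun j => ∑' z, w j z)]
  simpa [Function.comp_def, hsupp, hprod] using hasSum_fin_prod fun i : Fin N => hw i

lemma eventually_support_subset_range (f : ℕ →₀ M) :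
    ∀ᶠ N in atTop, f.support ⊆ range N := by
  obtain ⟨N, hN⟩ := f.support.exists_nat_subset_range
  filter_upwards [eventually_ge_atTop N] with n hn
  exact hN.trans (range_mono hn)

variable {w : ℕ → M → 𝕜} {C : ℝ}

lemma summable_finsupp_prod (hw₀ : ∀ j, w j 0 = 1) (hw : ∀ j, Summable (w j))
    (hC : ∀ N, ∏ j ∈ range N, ∑' z, ‖w j z‖ ≤ C) :
    Summable fun f : ℕ →₀ M => ‖f.prod w‖ := by
  refine summable_of_sum_le (c := C) (fun _ => norm_nonneg _) fun T => ?_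
  obtain ⟨N, hN⟩ :=
    ((eventually_all_finset T).mpr fun f _ => eventually_support_subset_range f).exists
  have hnonneg (f : ℕ →₀ M) : 0 ≤ f.prod fun j z => ‖w j z‖ := prod_nonneg fun _ _ => norm_nonneg _
  have hsum := hasSum_indicator_finsupp_prod (w := fun j z => ‖w j z‖)
    (fun j => by simp [hw₀]) (fun j => (hw j).norm) N
  calc ∑ f ∈ T, ‖f.prod w‖
      = ∑ f ∈ T, {f : ℕ →₀ M | f.support ⊆ range N}.indicator
          (fun f => f.prod fun j z => ‖w j z‖) f :=
        sum_congr rfl fun f hf => by rw [Set.indicator_of_mem (hN f hf)]; exact norm_prod _ _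
    _ ≤ ∏ j ∈ range N, ∑' z, ‖w j z‖ :=
        sum_le_hasSum _ (fun f _ => Set.indicator_nonneg (fun f _ => hnonneg f) f) hsum
    _ ≤ C := hC N

theorem hasSum_finsupp_prod (hw₀ : ∀ j, w j 0 = 1) (hw : ∀ j, Summable (w j))
    (hC : ∀ N, ∏ j ∈ range N, ∑' z, ‖w j z‖ ≤ C) {P : 𝕜}
    (hP : Tendsto (fun N => ∏ j ∈ range N, ∑' z, w j z) atTop (𝓝 P)) :
    HasSum (fun f : ℕ →₀ M => f.prod w) P := by
  have hsum := summable_finsupp_prod hw₀ hw hC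
  have hlim : Tendsto (fun N => ∏ j ∈ range N, ∑' z, w j z) atTop
      (𝓝 (∑' f : ℕ →₀ M, f.prod w)) := by
    simp only [← fun N => (hasSum_indicator_finsupp_prod hw₀ hw N).tsum_eq]
    refine tendsto_tsum_of_dominated_convergence hsum (fun f => ?_)
      (Eventually.of_forall fun N f => norm_indicator_le_norm_self _ _)
    refine tendsto_const_nhds.congr' ?_
    filter_upwards [eventually_support_subset_range f] with N hN
    rw [Set.indicator_of_mem hN]
  exact tendsto_nhds_unique hlim hP ▸ hsum.of_norm.hasSum

end FinsuppSums

lemma hasSum_card_fiber_mul {ι κ : Type*} {g : ι → κ} {c : κ → ℂ} {S : ℂ}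
    (h : HasSum (fun i => c (g i)) S) :
    HasSum (fun k => (Nat.card {i // g i = k} : ℂ) * c k) S := by
  rw [← (Equiv.sigmaFiberEquiv g).hasSum_iff] at h
  have hfiber (k : κ) : (fun i : {i // g i = k} => c (g i)) = fun _ => c k :=
    funext fun i => by rw [i.2]
  convert h.sigma fun k => (h.summable.sigma_factor k).hasSum using 2 with k
  change _ = ∑' i : {i // g i = k}, c (g i)
  rw [hfiber, tsum_const, nsmul_eq_mul]

/-! ### The two-variable generating function -/

section Gaps

/-- The contribution to one of the two partitions of a gap of size `a` in row `j`, where `m` is the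
larger of the two gaps in that row: every earlier row is lifted by `m`. -/
noncomputable def gapShape (j a m : ℕ) : ℕ →₀ ℕ :=
  Finsupp.single j a + ∑ i ∈ range j, Finsupp.single i m

/-- The first (`e = Prod.fst`) or second (`e = Prod.snd`) member of the pair of partitions with the
gaps `f`; see `gaps`. -/
noncomputable def ofGaps (e : ℕ × ℕ → ℕ) (f : ℕ →₀ ℕ × ℕ) : ℕ →₀ ℕ :=
  f.sum fun j z => gapShape j (e z) (max z.1 z.2)

/-- The sum over the rows `j ≥ i` of the larger gap, which is the larger part in row `i`. -/
noncomputable def gapTail (f : ℕ →₀ ℕ × ℕ) (i : ℕ) : ℕ :=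
  f.sum fun j z => if i ≤ j then max z.1 z.2 else 0

/-- The gaps `(α_i - M_{i+1}, β_i - M_{i+1})` of a pair of partitions `(α, β)`, where
`M_i = max(α_i, β_i)`. For pairs with steadily decreasing parts no subtraction is truncated. -/
noncomputable def gaps (p : (ℕ →₀ ℕ) × (ℕ →₀ ℕ)) : ℕ →₀ ℕ × ℕ :=
  Finsupp.onFinset (p.1.support ∪ p.2.support)
    (fun i => (p.1 i - max (p.1 (i + 1)) (p.2 (i + 1)), p.2 i - max (p.1 (i + 1)) (p.2 (i + 1))))
    fun i hi => by
      contrapose! hi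
      simp only [mem_union, Finsupp.mem_support_iff, not_or, not_not] at hi
      simp [hi]

/-- The bidegree `(|α|, |β|)` of the pair of partitions with gaps `f`. -/
noncomputable def gapWeight (f : ℕ →₀ ℕ × ℕ) : ℕ × ℕ :=
  (f.sum fun j z => z.1 + j * max z.1 z.2, f.sum fun j z => z.2 + j * max z.1 z.2)

lemma gaps_apply (p : (ℕ →₀ ℕ) × (ℕ →₀ ℕ)) (i : ℕ) :
    gaps p i =
      (p.1 i - max (p.1 (i + 1)) (p.2 (i + 1)), p.2 i - max (p.1 (i + 1)) (p.2 (i + 1))) :=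
  rfl

lemma gapShape_apply (j a m i : ℕ) :
    gapShape j a m i = (if j = i then a else 0) + if i + 1 ≤ j then m else 0 := by
  simp [gapShape, Finsupp.single_apply]

lemma degree_gapShape (j a m : ℕ) : (gapShape j a m).degree = a + j * m := by
  simp [gapShape]

lemma gapTail_succ (f : ℕ →₀ ℕ × ℕ) (i : ℕ) :
    gapTail f i = max (f i).1 (f i).2 + gapTail f (i + 1) := by
  have hsplit (j : ℕ) (z : ℕ × ℕ) : (if i ≤ j then max z.1 z.2 else 0) =
      (if i = j then max z.1 z.2 else 0) + if i + 1 ≤ j then max z.1 z.2 else 0 := by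
    split_ifs <;> omega
  simp only [gapTail, hsplit, Finsupp.sum_add]
  rw [Finsupp.sum_ite_eq]
  split_ifs with h
  · rfl
  · simp [Finsupp.notMem_support_iff.mp h]

lemma ofGaps_apply {e : ℕ × ℕ → ℕ} (he : e 0 = 0) (f : ℕ →₀ ℕ × ℕ) (i : ℕ) :
    ofGaps e f i = e (f i) + gapTail f (i + 1) := by
  simp only [ofGaps, Finsupp.sum_apply, gapShape_apply, Finsupp.sum_add, gapTail]
  rw [Finsupp.sum_ite_eq']
  split_ifs with h
  · rfl
  · rw [Finsupp.notMem_support_iff.mp h, he]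

lemma ofGaps_fst_apply (f : ℕ →₀ ℕ × ℕ) (i : ℕ) :
    ofGaps Prod.fst f i = (f i).1 + gapTail f (i + 1) :=
  ofGaps_apply rfl f i

lemma ofGaps_snd_apply (f : ℕ →₀ ℕ × ℕ) (i : ℕ) :
    ofGaps Prod.snd f i = (f i).2 + gapTail f (i + 1) :=
  ofGaps_apply rfl f i

lemma max_ofGaps_apply (f : ℕ →₀ ℕ × ℕ) (i : ℕ) :
    max (ofGaps Prod.fst f i) (ofGaps Prod.snd f i) = gapTail f i := by
  rw [ofGaps_fst_apply, ofGaps_snd_apply, gapTail_succ f i, max_add_add_right]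

lemma steadilyDecreasing_ofGaps (f : ℕ →₀ ℕ × ℕ) :
    SteadilyDecreasing (ofGaps Prod.fst f) (ofGaps Prod.snd f) := fun i => by
  rw [max_ofGaps_apply, ofGaps_fst_apply, ofGaps_snd_apply]
  exact le_min (Nat.le_add_left _ _) (Nat.le_add_left _ _)

lemma gaps_ofGaps (f : ℕ →₀ ℕ × ℕ) : gaps (ofGaps Prod.fst f, ofGaps Prod.snd f) = f := by
  refine Finsupp.ext fun i => ?_
  rw [gaps_apply]
  dsimp only
  rw [max_ofGaps_apply, ofGaps_fst_apply, ofGaps_snd_apply, Nat.add_sub_cancel,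
    Nat.add_sub_cancel]

lemma eq_of_eventually_eq_of_succ {u v : ℕ → ℕ} (huv : ∀ᶠ i in atTop, u i = v i)
    (hstep : ∀ i, u (i + 1) = v (i + 1) → u i = v i) : u = v := by
  obtain ⟨N, hN⟩ := eventually_atTop.mp huv
  funext i
  rcases le_total N i with h | h
  · exact hN i h
  · exact Nat.decreasingInduction (motive := fun i _ => u i = v i) (fun i _ => hstep i)
      (hN N le_rfl) h

lemma eventually_gapTail_eq_zero (f : ℕ →₀ ℕ × ℕ) : ∀ᶠ i in atTop, gapTail f i = 0 := by
  filter_upwards [eventually_support_subset_range f] with i hi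
  exact sum_eq_zero fun j hj => if_neg (mem_range.mp (hi hj)).not_ge

lemma eventually_finsupp_eq_zero (g : ℕ →₀ ℕ) : ∀ᶠ i in atTop, g i = 0 := by
  filter_upwards [eventually_support_subset_range g] with i hi
  exact Finsupp.notMem_support_iff.mp fun h => (mem_range.mp (hi h)).false

variable {p : (ℕ →₀ ℕ) × (ℕ →₀ ℕ)}

lemma gapTail_gaps (hp : SteadilyDecreasing p.1 p.2) (i : ℕ) :
    gapTail (gaps p) i = max (p.1 i) (p.2 i) := by
  refine congrFun (eq_of_eventually_eq_of_succ (v := fun i => max (p.1 i) (p.2 i)) ?_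
    fun i hi => ?_) i
  · filter_upwards [eventually_gapTail_eq_zero (gaps p), eventually_finsupp_eq_zero p.1,
      eventually_finsupp_eq_zero p.2] with i h h₁ h₂
    simp [h, h₁, h₂]
  · have := hp i
    rw [gapTail_succ, hi]
    simp only [gaps_apply]
    omega

lemma ofGaps_fst_gaps (hp : SteadilyDecreasing p.1 p.2) : ofGaps Prod.fst (gaps p) = p.1 := by
  ext i
  have := hp i
  simp only [ofGaps_fst_apply, gapTail_gaps hp, gaps_apply]
  omega

lemma ofGaps_snd_gaps (hp : SteadilyDecreasing p.1 p.2) : ofGaps Prod.snd (gaps p) = p.2 := by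
  ext i
  have := hp i
  simp only [ofGaps_snd_apply, gapTail_gaps hp, gaps_apply]
  omega

lemma gapWeight_eq (f : ℕ →₀ ℕ × ℕ) :
    gapWeight f = ((ofGaps Prod.fst f).degree, (ofGaps Prod.snd f).degree) := by
  simp only [gapWeight, ofGaps, map_finsuppSum, degree_gapShape]

theorem bipartitePi_eq_card_gapWeight (m n : ℕ) :
    bipartitePi m n = Nat.card {f : ℕ →₀ ℕ × ℕ // gapWeight f = (m, n)} := by
  have hof (f : {f : ℕ →₀ ℕ × ℕ // gapWeight f = (m, n)}) := steadilyDecreasing_ofGaps f.1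
  have hdeg (f : {f : ℕ →₀ ℕ × ℕ // gapWeight f = (m, n)}) :=
    Prod.ext_iff.mp ((gapWeight_eq f.1).symm.trans f.2)
  symm
  exact Nat.card_congr
    { toFun := fun f => ⟨(ofGaps Prod.fst f.1, ofGaps Prod.snd f.1),
        fun i => (le_max_left _ _).trans ((hof f i).trans (min_le_left _ _)),
        fun i => (le_max_right _ _).trans ((hof f i).trans (min_le_right _ _)),
        hof f, (hdeg f).1, (hdeg f).2⟩
      invFun := fun p => ⟨gaps p.1, by
        obtain ⟨-, -, hsteady, hm, hn⟩ := p.2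
        rw [gapWeight_eq, ofGaps_fst_gaps hsteady, ofGaps_snd_gaps hsteady]
        exact Prod.ext hm hn⟩
      left_inv := fun f => Subtype.ext (gaps_ofGaps f.1)
      right_inv := fun p => Subtype.ext
        (Prod.ext (ofGaps_fst_gaps p.2.2.2.1) (ofGaps_snd_gaps p.2.2.2.1)) }

end Gaps

section GeneratingFunction

/-- The pairs `(a, b)` of natural numbers, split into those with `b ≤ a` and those with `a < b`
and parametrized by the smaller entry and the excess of the larger one. -/
def minExcessEquiv : (ℕ × ℕ) ⊕ (ℕ × ℕ) ≃ ℕ × ℕ where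
  toFun := Sum.elim (fun z => (z.1 + z.2, z.1)) fun z => (z.1, z.1 + z.2 + 1)
  invFun z := if z.2 ≤ z.1 then Sum.inl (z.2, z.1 - z.2) else Sum.inr (z.1, z.2 - z.1 - 1)
  left_inv := by rintro (⟨m, d⟩ | ⟨m, d⟩) <;> grind
  right_inv := by rintro ⟨a, b⟩; grind

/-- The factor that the gap `z` in row `j` contributes to `x^|α| y^|β|`. -/
noncomputable def gapTerm (x y : ℂ) (j : ℕ) (z : ℕ × ℕ) : ℂ :=
  x ^ (z.1 + j * max z.1 z.2) * y ^ (z.2 + j * max z.1 z.2)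

/-- The generating function of the gaps in row `j`. -/
noncomputable def gapRow (x y : ℂ) (j : ℕ) : ℂ :=
  (1 - (x * y) ^ (2 * j + 1)) /
    ((1 - (x * y) ^ (j + 1)) * ((1 - x * (x * y) ^ j) * (1 - y * (x * y) ^ j)))

lemma finsupp_prod_gapTerm (x y : ℂ) (f : ℕ →₀ ℕ × ℕ) :
    f.prod (gapTerm x y) = x ^ (gapWeight f).1 * y ^ (gapWeight f).2 := by
  simp only [gapWeight, Finsupp.sum, Finsupp.prod, gapTerm, prod_mul_distrib,
    prod_pow_eq_pow_sum]

lemma hasSum_geometric_mul_geometric {a b : ℂ} (ha : ‖a‖ < 1) (hb : ‖b‖ < 1) :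
    HasSum (fun z : ℕ × ℕ => a ^ z.1 * b ^ z.2) ((1 - a)⁻¹ * (1 - b)⁻¹) :=
  (hasSum_geometric_of_norm_lt_one ha).mul (hasSum_geometric_of_norm_lt_one hb)
    (summable_mul_of_summable_norm (summable_norm_geometric_of_norm_lt_one ha)
      (summable_norm_geometric_of_norm_lt_one hb))

variable {x y : ℂ}

theorem hasSum_gapTerm (hx : ‖x‖ < 1) (hy : ‖y‖ < 1) (j : ℕ) :
    HasSum (gapTerm x y j) (gapRow x y j) := by
  have hq : ‖x * y‖ < 1 := norm_mul_lt_one hx hy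
  have hQ : ‖(x * y) ^ (j + 1)‖ < 1 := norm_pow_lt_one hq j.succ_ne_zero
  have hX : ‖x * (x * y) ^ j‖ < 1 := norm_mul_pow_lt_one hx hq j
  have hY : ‖y * (x * y) ^ j‖ < 1 := norm_mul_pow_lt_one hy hq j
  have hge (z : ℕ × ℕ) : gapTerm x y j (minExcessEquiv (Sum.inl z)) =
      ((x * y) ^ (j + 1)) ^ z.1 * (x * (x * y) ^ j) ^ z.2 := by
    have : max (z.1 + z.2) z.1 = z.1 + z.2 := by omega
    simp only [gapTerm, minExcessEquiv, Equiv.coe_fn_mk, Sum.elim_inl, this]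
    ring
  have hlt (z : ℕ × ℕ) : gapTerm x y j (minExcessEquiv (Sum.inr z)) =
      y * (x * y) ^ j * (((x * y) ^ (j + 1)) ^ z.1 * (y * (x * y) ^ j) ^ z.2) := by
    have : max z.1 (z.1 + z.2 + 1) = z.1 + z.2 + 1 := by omega
    simp only [gapTerm, minExcessEquiv, Equiv.coe_fn_mk, Sum.elim_inr, this]
    ring
  have hrow : gapRow x y j = (1 - (x * y) ^ (j + 1))⁻¹ * (1 - x * (x * y) ^ j)⁻¹ +
      y * (x * y) ^ j * ((1 - (x * y) ^ (j + 1))⁻¹ * (1 - y * (x * y) ^ j)⁻¹) := by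
    have h₁ := one_sub_ne_zero_of_norm_lt_one hQ
    have h₂ := one_sub_ne_zero_of_norm_lt_one hX
    have h₃ := one_sub_ne_zero_of_norm_lt_one hY
    rw [gapRow]
    field_simp
    ring
  rw [← minExcessEquiv.hasSum_iff, hrow]
  refine HasSum.sum ?_ ?_
  · simpa only [Function.comp_def, hge] using hasSum_geometric_mul_geometric hQ hX
  · simpa only [Function.comp_def, hlt] using (hasSum_geometric_mul_geometric hQ hY).mul_left _

lemma prod_one_sub_odd_pow (q : ℂ) (N : ℕ) :
    (∏ j ∈ range N, (1 - q ^ (2 * j + 1))) * qPochhammer (q ^ 2) (q ^ 2) N =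
      qPochhammer q q (2 * N) := by
  induction N with
  | zero => simp
  | succ N ih =>
    rw [prod_range_succ, mul_add_one, qPochhammer_succ, qPochhammer_succ q q (2 * N + 1),
      qPochhammer_succ q q (2 * N), ← ih]
    ring

theorem tendsto_prod_gapRow (hx : ‖x‖ < 1) (hy : ‖y‖ < 1) :
    Tendsto (fun N => ∏ j ∈ range N, gapRow x y j) atTop
      (𝓝 ((eulerFunction ((x * y) ^ 2))⁻¹ *
        ((qPochhammerInf x (x * y))⁻¹ * (qPochhammerInf y (x * y))⁻¹))) := by
  set q := x * y with hq_def
  have hq : ‖q‖ < 1 := norm_mul_lt_one hx hy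
  have hq₂ : ‖q ^ 2‖ < 1 := norm_pow_lt_one hq two_ne_zero
  have hprod (N : ℕ) : ∏ j ∈ range N, gapRow x y j =
      qPochhammer q q (2 * N) / qPochhammer (q ^ 2) (q ^ 2) N / qPochhammer q q N *
        ((qPochhammer x q N)⁻¹ * (qPochhammer y q N)⁻¹) := by
    rw [← prod_one_sub_odd_pow, mul_div_cancel_right₀ _ (qPochhammer_ne_zero hq₂ hq₂ N)]
    simp only [gapRow, ← hq_def, prod_div_distrib, prod_mul_distrib, qPochhammer, ← pow_succ']
    rw [← div_div, div_eq_mul_inv, mul_inv]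
  have hlim := ((((tendsto_qPochhammer_self hq).comp
    (tendsto_id.const_mul_atTop' two_pos)).div (tendsto_qPochhammer_self hq₂)
      (eulerFunction_ne_zero hq₂)).div (tendsto_qPochhammer_self hq)
        (eulerFunction_ne_zero hq)).mul
    (((tendsto_qPochhammer x hq).inv₀ (qPochhammerInf_ne_zero hx hq)).mul
      ((tendsto_qPochhammer y hq).inv₀ (qPochhammerInf_ne_zero hy hq)))
  rw [div_div_cancel_left' (eulerFunction_ne_zero hq)] at hlim
  exact hlim.congr fun N => (hprod N).symm

lemma tsum_norm_gapTerm (hx : ‖x‖ < 1) (hy : ‖y‖ < 1) (j : ℕ) :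
    ∑' z, ‖gapTerm x y j z‖ = ‖gapRow ‖x‖ ‖y‖ j‖ := by
  have h := (hasSum_gapTerm (x := ‖x‖) (y := ‖y‖) (by simpa) (by simpa) j).tsum_eq
  have hnorm (z : ℕ × ℕ) : gapTerm ‖x‖ ‖y‖ j z = ‖gapTerm x y j z‖ := by simp [gapTerm]
  simp only [← h, hnorm]
  rw [← Complex.ofReal_tsum, Complex.norm_real,
    Real.norm_of_nonneg (tsum_nonneg fun _ => norm_nonneg _)]

theorem hasSum_bipartitePi (hx : ‖x‖ < 1) (hy : ‖y‖ < 1) :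
    HasSum (fun p : ℕ × ℕ => (bipartitePi p.1 p.2 : ℂ) * (x ^ p.1 * y ^ p.2))
      ((eulerFunction ((x * y) ^ 2))⁻¹ *
        ((qPochhammerInf x (x * y))⁻¹ * (qPochhammerInf y (x * y))⁻¹)) := by
  have hlim := tendsto_prod_gapRow hx hy
  simp only [← (hasSum_gapTerm hx hy _).tsum_eq] at hlim
  obtain ⟨C, hC⟩ := (Metric.isBounded_range_of_tendsto _
    (tendsto_prod_gapRow (x := ‖x‖) (y := ‖y‖) (by simpa) (by simpa))).exists_norm_le
  have hbound (N : ℕ) : ∏ j ∈ range N, ∑' z, ‖gapTerm x y j z‖ ≤ C := by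
    simp only [tsum_norm_gapTerm hx hy]
    rw [← norm_prod]
    exact hC _ ⟨N, rfl⟩
  have hgaps := hasSum_finsupp_prod (w := gapTerm x y) (fun j => by simp [gapTerm])
    (fun j => (hasSum_gapTerm hx hy j).summable) hbound hlim
  simp only [finsupp_prod_gapTerm] at hgaps
  simpa only [bipartitePi_eq_card_gapWeight] using
    hasSum_card_fiber_mul (c := fun p : ℕ × ℕ => x ^ p.1 * y ^ p.2) hgaps

end GeneratingFunction

/-! ### Extracting the diagonal -/

section Diagonal

open Complex

lemma integral_exp_int_mul_I (k : ℤ) :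
    ∫ φ in (-Real.pi)..Real.pi, exp (k * φ * I) = if k = 0 then 2 * Real.pi else 0 := by
  split_ifs with hk
  · simp [hk, two_mul]
  · have hkI : (k * I : ℂ) ≠ 0 := mul_ne_zero (Int.cast_ne_zero.mpr hk) I_ne_zero
    have hperiod : exp (k * I * Real.pi) = exp (k * I * (-Real.pi : ℝ)) :=
      exp_eq_exp_iff_exists_int.mpr ⟨k, by push_cast; ring⟩
    simp only [mul_right_comm _ _ I]
    rw [integral_exp_mul_complex hkI, hperiod, sub_self, zero_div, ofReal_zero]

theorem hasSum_constantTerm {ι : Type*} [Countable ι] {a : ι → ℂ} {g : ι → ℤ} {F : ℝ → ℂ}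
    (hF : ∀ φ : ℝ, HasSum (fun j => a j * exp (g j * φ * I)) (F φ)) :
    HasSum (fun j => if g j = 0 then a j else 0)
      ((2 * Real.pi : ℂ)⁻¹ * ∫ φ in (-Real.pi)..Real.pi, F φ) := by
  have ha : Summable fun j => ‖a j‖ := by simpa using (hF 0).summable.norm
  have hnorm (j : ι) (φ : ℝ) : ‖a j * exp (g j * φ * I)‖ = ‖a j‖ := by
    rw [norm_mul, ← ofReal_intCast, ← ofReal_mul, norm_exp_ofReal_mul_I, mul_one]
  have hint := intervalIntegral.hasSum_integral_of_dominated_convergence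
    (μ := MeasureTheory.volume) (a := -Real.pi) (b := Real.pi) (fun j _ => ‖a j‖)
    (fun j => Continuous.aestronglyMeasurable (by fun_prop))
    (fun j => Eventually.of_forall fun φ _ => (hnorm j φ).le)
    (Eventually.of_forall fun _ _ => ha) (by simp) (Eventually.of_forall fun φ _ => hF φ)
  have hpi : (Real.pi : ℂ) ≠ 0 := ofReal_ne_zero.mpr Real.pi_ne_zero
  refine (hint.mul_left (2 * Real.pi : ℂ)⁻¹).congr_fun fun j => ?_
  rw [intervalIntegral.integral_const_mul, integral_exp_int_mul_I]
  split_ifs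
  · push_cast
    field_simp
  · simp

theorem hasSum_diagonal {c : ℕ × ℕ → ℂ} {w : ℂ} {F : ℝ → ℂ}
    (hF : ∀ φ : ℝ, HasSum
      (fun p : ℕ × ℕ => c p * ((w * exp (φ * I)) ^ p.1 * (w * exp (-(φ * I))) ^ p.2)) (F φ)) :
    HasSum (fun n => c (n, n) * (w ^ 2) ^ n)
      ((2 * Real.pi : ℂ)⁻¹ * ∫ φ in (-Real.pi)..Real.pi, F φ) := by
  have hterm (p : ℕ × ℕ) (φ : ℝ) :
      c p * ((w * exp (φ * I)) ^ p.1 * (w * exp (-(φ * I))) ^ p.2) =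
        c p * (w ^ p.1 * w ^ p.2) * exp (((p.1 - p.2 : ℤ) : ℂ) * φ * I) := by
    have hexp : ((p.1 - p.2 : ℤ) : ℂ) * φ * I = p.1 * (φ * I) + p.2 * -(φ * I) := by
      push_cast
      ring
    rw [hexp, exp_add, exp_nat_mul, exp_nat_mul, mul_pow, mul_pow]
    ring
  simp only [hterm] at hF
  have hconst := hasSum_constantTerm hF
  have hinj : Function.Injective fun n : ℕ => (n, n) := fun m n h => congrArg Prod.fst h
  rw [← hinj.hasSum_iff] at hconst
  · convert hconst using 2 with n
    simp only [Function.comp_apply, sub_self, if_true]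
    ring
  · rintro ⟨m, n⟩ hmn
    refine if_neg fun h => hmn ⟨m, ?_⟩
    rw [show n = m by omega]

lemma hasSum_eulerCoeff_mul_eulerCoeff {q x y : ℂ} (hq : ‖q‖ < 1) (hx : ‖x‖ < 1) (hy : ‖y‖ < 1) :
    HasSum (fun p : ℕ × ℕ => eulerCoeff q p.1 * eulerCoeff q p.2 * (x ^ p.1 * y ^ p.2))
      ((qPochhammerInf x q)⁻¹ * (qPochhammerInf y q)⁻¹) := by
  obtain ⟨C, hC, -⟩ := exists_norm_eulerCoeff_le hq
  have hsx := summable_mul_pow_of_norm_le hC hx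
  have hsy := summable_mul_pow_of_norm_le hC hy
  rw [← tsum_eulerCoeff_mul_pow hx hq, ← tsum_eulerCoeff_mul_pow hy hq]
  have hxy := summable_mul_of_summable_norm hsx.norm hsy.norm
  exact (hsx.hasSum.mul hsy.hasSum hxy).congr_fun fun p => mul_mul_mul_comm _ _ _ _

/-- The generating function `∑ π(n, n) q ^ n` of the diagonal, in closed form. -/
noncomputable def diagonalGF (q : ℂ) : ℂ :=
  falseTheta q / (eulerFunction q ^ 2 * eulerFunction (q ^ 2))

theorem hasSum_bipartitePi_diagonal {q : ℂ} (hq : ‖q‖ < 1) :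
    HasSum (fun n => (bipartitePi n n : ℂ) * q ^ n) (diagonalGF q) := by
  obtain ⟨w, rfl⟩ : ∃ w : ℂ, w ^ 2 = q := IsAlgClosed.exists_pow_nat_eq q two_pos
  have hw : ‖w‖ < 1 := by rwa [norm_pow, sq_lt_one_iff₀ (norm_nonneg w)] at hq
  have hx (φ : ℝ) : ‖w * exp (φ * I)‖ < 1 := by rwa [norm_mul, norm_exp_ofReal_mul_I, mul_one]
  have hy (φ : ℝ) : ‖w * exp (-(φ * I))‖ < 1 := by
    simpa only [ofReal_neg, neg_mul] using hx (-φ)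
  have hxy (φ : ℝ) : w * exp (φ * I) * (w * exp (-(φ * I))) = w ^ 2 := by
    rw [mul_mul_mul_comm, ← exp_add, add_neg_cancel, exp_zero, mul_one, sq]
  have hpairs := hasSum_diagonal fun φ => by
    simpa only [hxy] using hasSum_bipartitePi (hx φ) (hy φ)
  have hcoeff := hasSum_diagonal fun φ => hasSum_eulerCoeff_mul_eulerCoeff hq (hx φ) (hy φ)
  rw [intervalIntegral.integral_const_mul, mul_left_comm, ← hcoeff.tsum_eq] at hpairs
  simp only [← sq (eulerCoeff _ _), tsum_eulerCoeff_sq_mul_pow hq] at hpairs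
  rwa [← div_eq_inv_mul, div_div] at hpairs

end Diagonal

/-! ### Wright's circle method -/

section CoefficientIntegral

open Complex MeasureTheory

/-- The sector `|arg s| ≤ arctan Δ` in the right half-plane, the region of the major arc. -/
def sector (Δ : ℝ) : Set ℂ := {s | 0 < s.re ∧ |s.im| ≤ Δ * s.re}

lemma norm_exp_neg_lt_one {s : ℂ} (hs : 0 < s.re) : ‖exp (-s)‖ < 1 := by
  rw [norm_exp, neg_re]
  exact Real.exp_lt_one_iff.mpr (neg_lt_zero.mpr hs)

lemma ofReal_mul_cpow {r : ℝ} (hr : 0 < r) {z : ℂ} (hz : z ≠ 0) (b : ℂ) :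
    (r * z) ^ b = (r : ℂ) ^ b * z ^ b := by
  have hr' : (r : ℂ) ≠ 0 := ofReal_ne_zero.mpr hr.ne'
  rw [cpow_def_of_ne_zero (mul_ne_zero hr' hz), cpow_def_of_ne_zero hr', cpow_def_of_ne_zero hz,
    log_ofReal_mul hr hz, ofReal_log hr.le, add_mul, exp_add]

variable {a : ℕ → ℂ} {F : ℂ → ℂ}

theorem continuous_comp_of_hasSum_mul_pow {X : Type*} [TopologicalSpace X] {z : X → ℂ} {r : ℝ}
    (hF : ∀ q, ‖q‖ < 1 → HasSum (fun n => a n * q ^ n) (F q))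
    (hz : Continuous z) (hzr : ∀ x, ‖z x‖ = r) (hr₀ : 0 ≤ r) (hr : r < 1) :
    Continuous fun x => F (z x) := by
  have hsum : Summable fun n => ‖a n * (r : ℂ) ^ n‖ :=
    (hF r (by rwa [norm_real, Real.norm_of_nonneg hr₀])).summable.norm
  have htsum (x : X) : F (z x) = ∑' n, a n * z x ^ n := (hF _ ((hzr x).trans_lt hr)).tsum_eq.symm
  simp only [htsum]
  refine continuous_tsum (fun n => by fun_prop) hsum fun n x => le_of_eq ?_
  rw [norm_mul, norm_mul, norm_pow, norm_pow, hzr, norm_real, Real.norm_of_nonneg hr₀]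

theorem coeff_eq_integral (hF : ∀ q, ‖q‖ < 1 → HasSum (fun n => a n * q ^ n) (F q))
    {t : ℝ} (ht : 0 < t) (n : ℕ) :
    a n = (2 * Real.pi : ℂ)⁻¹ * ∫ θ in (-Real.pi)..Real.pi,
      F (exp (-(t + θ * I))) * exp (n * (t + θ * I)) := by
  have hterm (θ : ℝ) (j : ℕ) :
      a j * exp (-(t + θ * I)) ^ j * exp (n * (t + θ * I)) =
        a j * exp ((n - j) * t) * exp (((n - j : ℤ) : ℂ) * θ * I) := by
    rw [← exp_nat_mul, mul_assoc, mul_assoc, ← exp_add, ← exp_add]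
    congr 2
    push_cast
    ring
  have hsum (θ : ℝ) := (hF (exp (-(t + θ * I))) (norm_exp_neg_lt_one (by simpa))).mul_right
    (exp (n * (t + θ * I)))
  simp only [hterm] at hsum
  rw [← (hasSum_constantTerm hsum).tsum_eq, tsum_eq_single n]
  · simp
  · intro j hj
    exact if_neg (by omega)

/-- The normalized variable `ω = s / τ ^ 2` on the circle `re s = τ ^ 2`, whose points are
`s = τ ^ 2 + i τ ^ 3 v`. -/
noncomputable def saddleVar (τ v : ℝ) : ℂ := 1 + (τ * v : ℝ) * I

/-- The integrand of the coefficient integral after the substitution `θ = τ ^ 3 v`, divided by its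
order of magnitude `exp (2 A / τ ^ 2) τ ^ (2 B)`. -/
noncomputable def saddleIntegrand (F : ℂ → ℂ) (A B τ v : ℝ) : ℂ :=
  F (exp (-((τ ^ 2 : ℝ) * saddleVar τ v))) * exp ((A / τ ^ 2 : ℝ) * (saddleVar τ v - 2)) /
    (τ ^ (2 * B) : ℝ)

lemma saddleVar_re (τ v : ℝ) : (saddleVar τ v).re = 1 := by simp [saddleVar]

lemma saddleVar_im (τ v : ℝ) : (saddleVar τ v).im = τ * v := by simp [saddleVar]

lemma saddleVar_ne_zero (τ v : ℝ) : saddleVar τ v ≠ 0 := fun h => by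
  simpa [saddleVar_re] using congrArg re h

lemma sq_mul_saddleVar (τ v : ℝ) :
    ((τ ^ 2 : ℝ) : ℂ) * saddleVar τ v = (τ ^ 2 : ℝ) + (τ ^ 3 * v : ℝ) * I := by
  rw [saddleVar]
  push_cast
  ring

lemma continuous_saddleIntegrand (hF : ∀ q, ‖q‖ < 1 → HasSum (fun n => a n * q ^ n) (F q))
    (A B : ℝ) {τ : ℝ} (hτ : 0 < τ) : Continuous (saddleIntegrand F A B τ) := by
  have hvar : Continuous (saddleVar τ) := by unfold saddleVar; fun_prop
  have hnorm (v : ℝ) : ‖exp (-((τ ^ 2 : ℝ) * saddleVar τ v))‖ = Real.exp (-τ ^ 2) := by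
    rw [norm_exp, neg_re, re_ofReal_mul, saddleVar_re, mul_one]
  have hcomp := continuous_comp_of_hasSum_mul_pow hF (by fun_prop) hnorm (Real.exp_pos _).le
    (Real.exp_lt_one_iff.mpr (neg_lt_zero.mpr (by positivity)))
  exact (hcomp.mul (by fun_prop)).div_const _

theorem coeff_eq_integral_saddleIntegrand
    (hF : ∀ q, ‖q‖ < 1 → HasSum (fun n => a n * q ^ n) (F q)) {A τ : ℝ} (B : ℝ) (hτ : 0 < τ)
    {n : ℕ} (hn : n * τ ^ 4 = A) :
    a n = ((2 * Real.pi)⁻¹ * τ ^ (3 : ℕ) * (Real.exp (2 * A / τ ^ 2) * τ ^ (2 * B)) : ℝ) *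
      ∫ v in (-(Real.pi / τ ^ 3))..(Real.pi / τ ^ 3), saddleIntegrand F A B τ v := by
  have hpow : ((τ ^ (2 * B) : ℝ) : ℂ) ≠ 0 := ofReal_ne_zero.mpr (Real.rpow_pos_of_pos hτ _).ne'
  have hexponent (v : ℝ) : (n : ℂ) * ((τ ^ 2 : ℝ) * saddleVar τ v) =
      (2 * A / τ ^ 2 : ℝ) + (A / τ ^ 2 : ℝ) * (saddleVar τ v - 2) := by
    have hτ' : (τ : ℂ) ≠ 0 := ofReal_ne_zero.mpr hτ.ne'
    rw [← hn]
    push_cast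
    field_simp
    ring
  have hintegrand (v : ℝ) : F (exp (-((τ ^ 2 : ℝ) + (τ ^ 3 * v : ℝ) * I))) *
      exp (n * ((τ ^ 2 : ℝ) + (τ ^ 3 * v : ℝ) * I)) =
        (Real.exp (2 * A / τ ^ 2) * τ ^ (2 * B) : ℝ) * saddleIntegrand F A B τ v := by
    rw [← sq_mul_saddleVar, hexponent, exp_add, saddleIntegrand, ofReal_mul, ofReal_exp]
    field_simp
  have hscale : τ ^ 3 * (Real.pi / τ ^ 3) = Real.pi := by field_simp
  rw [coeff_eq_integral hF (pow_pos hτ 2) n]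
  nth_rw 2 3 [← hscale]
  rw [← mul_neg, ← intervalIntegral.smul_integral_comp_mul_left]
  simp only [hintegrand]
  rw [intervalIntegral.integral_const_mul, real_smul]
  push_cast
  ring

end CoefficientIntegral

section MajorArc

open Complex MeasureTheory

variable {F : ℂ → ℂ} {A B : ℝ} {L : ℂ} {Δ τ v : ℝ}

lemma saddleIntegrand_eq (F : ℂ → ℂ) (A B : ℝ) (hτ : 0 < τ) (v : ℝ) {s : ℂ}
    (hs : s = (τ ^ 2 : ℝ) * saddleVar τ v) :
    saddleIntegrand F A B τ v = F (exp (-s)) * exp (-(A / s)) / s ^ (B : ℂ) *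
      (saddleVar τ v ^ (B : ℂ) * exp (-(A * v ^ 2 / saddleVar τ v))) := by
  have hω := saddleVar_ne_zero τ v
  have hτ' : (τ : ℂ) ≠ 0 := ofReal_ne_zero.mpr hτ.ne'
  have hpow : s ^ (B : ℂ) = (τ ^ (2 * B) : ℝ) * saddleVar τ v ^ (B : ℂ) := by
    rw [hs, ofReal_mul_cpow (by positivity) hω, ← ofReal_cpow (by positivity),
      Real.rpow_mul hτ.le, Real.rpow_two]
  have hexponent : ((A / τ ^ 2 : ℝ) : ℂ) * (saddleVar τ v - 2) =
      -(A / s) + -(A * v ^ 2 / saddleVar τ v) := by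
    have hsq : (saddleVar τ v - 1) ^ 2 = -(τ ^ 2 * v ^ 2) := by
      rw [saddleVar, add_sub_cancel_left, mul_pow, I_sq]
      push_cast
      ring
    rw [hs]
    push_cast
    field_simp
    linear_combination A * hsq
  have hωB : saddleVar τ v ^ (B : ℂ) ≠ 0 := by simp [cpow_eq_zero_iff, hω]
  rw [saddleIntegrand, ← hs, hexponent, exp_add, hpow]
  field_simp

lemma sq_mul_saddleVar_mem_sector (hτ : 0 < τ) (hv : |τ * v| ≤ Δ) :
    ((τ ^ 2 : ℝ) : ℂ) * saddleVar τ v ∈ sector Δ := by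
  have hτ₂ : 0 < τ ^ 2 := by positivity
  refine ⟨?_, ?_⟩
  · rwa [re_ofReal_mul, saddleVar_re, mul_one]
  · rw [im_ofReal_mul, re_ofReal_mul, saddleVar_re, saddleVar_im, mul_one, abs_mul,
      abs_of_pos hτ₂, mul_comm]
    gcongr

lemma norm_saddleVar_le (hv : |τ * v| ≤ Δ) : ‖saddleVar τ v‖ ≤ 1 + Δ := by
  refine (norm_le_abs_re_add_abs_im _).trans ?_
  rw [saddleVar_re, saddleVar_im, abs_one]
  gcongr

lemma norm_saddleVar_cpow_le (B : ℝ) (hv : |τ * v| ≤ Δ) :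
    ‖saddleVar τ v ^ (B : ℂ)‖ ≤ (1 + Δ) ^ |B| := by
  have hone : 1 ≤ ‖saddleVar τ v‖ := by
    simpa [saddleVar_re] using abs_re_le_norm (saddleVar τ v)
  rw [norm_cpow_real]
  calc ‖saddleVar τ v‖ ^ B ≤ ‖saddleVar τ v‖ ^ |B| :=
        Real.rpow_le_rpow_of_exponent_le hone (le_abs_self B)
    _ ≤ (1 + Δ) ^ |B| :=
        Real.rpow_le_rpow (norm_nonneg _) (norm_saddleVar_le hv) (abs_nonneg B)

lemma norm_exp_neg_div_saddleVar_le (hA : 0 ≤ A) (hv : |τ * v| ≤ Δ) :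
    ‖exp (-(A * v ^ 2 / saddleVar τ v))‖ ≤ Real.exp (-(A / (1 + Δ ^ 2)) * v ^ 2) := by
  have hnormSq : normSq (saddleVar τ v) = 1 + (τ * v) ^ 2 := by
    rw [normSq_apply, saddleVar_re, saddleVar_im]
    ring
  have hre : (-(A * v ^ 2 / saddleVar τ v) : ℂ).re = -(A * v ^ 2 / (1 + (τ * v) ^ 2)) := by
    rw [neg_re, ← ofReal_pow, ← ofReal_mul, div_re, hnormSq, saddleVar_re, ofReal_re, ofReal_im]
    ring
  have hsq : (τ * v) ^ 2 ≤ Δ ^ 2 := sq_le_sq.mpr (hv.trans (le_abs_self Δ))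
  rw [norm_exp, hre, Real.exp_le_exp, neg_mul, neg_le_neg_iff, div_mul_eq_mul_div]
  gcongr

theorem tendsto_saddleIntegrand (hΔ : 0 < Δ)
    (hmajor : Tendsto (fun s => F (exp (-s)) * exp (-(A / s)) / s ^ (B : ℂ)) (𝓝[sector Δ] 0) (𝓝 L))
    (v : ℝ) :
    Tendsto (fun τ => saddleIntegrand F A B τ v) (𝓝[>] 0) (𝓝 (L * exp (-(A * v ^ 2)))) := by
  have hvar : Tendsto (fun τ => saddleVar τ v) (𝓝[>] 0) (𝓝 1) := by
    have : Continuous fun τ => saddleVar τ v := by unfold saddleVar; fun_prop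
    simpa [saddleVar] using (this.tendsto 0).mono_left nhdsWithin_le_nhds
  have hsector : Tendsto (fun τ : ℝ => ((τ ^ 2 : ℝ) : ℂ) * saddleVar τ v) (𝓝[>] 0)
      (𝓝[sector Δ] 0) := by
    refine tendsto_nhdsWithin_iff.mpr ⟨?_, ?_⟩
    · have : Tendsto (fun τ : ℝ => ((τ ^ 2 : ℝ) : ℂ)) (𝓝[>] 0) (𝓝 0) := by
        have : Continuous fun τ : ℝ => ((τ ^ 2 : ℝ) : ℂ) := by fun_prop
        simpa using (this.tendsto 0).mono_left nhdsWithin_le_nhds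
      simpa using this.mul hvar
    · have hsmall : ∀ᶠ τ : ℝ in 𝓝[>] 0, |τ * v| < Δ := by
        have : Continuous fun τ : ℝ => |τ * v| := by fun_prop
        exact nhdsWithin_le_nhds ((this.tendsto 0).eventually_lt_const (by simpa))
      filter_upwards [hsmall, self_mem_nhdsWithin] with τ hτv hτ
      exact sq_mul_saddleVar_mem_sector hτ hτv.le
  have hfactor : Tendsto (fun τ => saddleVar τ v ^ (B : ℂ) * exp (-(A * v ^ 2 / saddleVar τ v)))
      (𝓝[>] 0) (𝓝 (exp (-(A * v ^ 2)))) := by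
    simpa using (hvar.cpow tendsto_const_nhds (by simp)).mul
      (continuous_exp.continuousAt.tendsto.comp
        ((tendsto_const_nhds (x := (A * v ^ 2 : ℂ))).div hvar one_ne_zero).neg)
  refine ((hmajor.comp hsector).mul hfactor).congr' ?_
  filter_upwards [self_mem_nhdsWithin] with τ hτ
  exact (saddleIntegrand_eq F A B hτ v rfl).symm

theorem exists_norm_saddleIntegrand_le_of_major (hA : 0 ≤ A) (hΔ : 0 ≤ Δ)
    (hmajor : Tendsto (fun s => F (exp (-s)) * exp (-(A / s)) / s ^ (B : ℂ))
      (𝓝[sector Δ] 0) (𝓝 L)) :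
    ∃ C, ∀ᶠ τ : ℝ in 𝓝[>] 0, ∀ v, |τ * v| ≤ Δ →
      ‖saddleIntegrand F A B τ v‖ ≤ C * Real.exp (-(A / (1 + Δ ^ 2)) * v ^ 2) := by
  obtain ⟨δ, hδ, hball⟩ := Metric.mem_nhdsWithin_iff.mp
    (hmajor.norm.eventually_le_const (lt_add_one ‖L‖))
  have hsmall : ∀ᶠ τ : ℝ in 𝓝[>] 0, τ ^ 2 * (1 + Δ) < δ := by
    have : Continuous fun τ : ℝ => τ ^ 2 * (1 + Δ) := by fun_prop
    exact nhdsWithin_le_nhds ((this.tendsto 0).eventually_lt_const (by simpa))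
  refine ⟨(‖L‖ + 1) * (1 + Δ) ^ |B|, ?_⟩
  filter_upwards [hsmall, self_mem_nhdsWithin] with τ hτδ hτ v hv
  have hnear : dist (((τ ^ 2 : ℝ) : ℂ) * saddleVar τ v) 0 < δ := by
    rw [dist_zero_right, norm_mul, norm_real, Real.norm_of_nonneg (sq_nonneg τ)]
    exact (mul_le_mul_of_nonneg_left (norm_saddleVar_le hv) (sq_nonneg τ)).trans_lt hτδ
  rw [saddleIntegrand_eq F A B hτ v rfl, norm_mul, norm_mul, mul_assoc]
  exact mul_le_mul (hball ⟨hnear, sq_mul_saddleVar_mem_sector hτ hv⟩)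
    (mul_le_mul (norm_saddleVar_cpow_le B hv) (norm_exp_neg_div_saddleVar_le hA hv)
      (norm_nonneg _) (by positivity)) (by positivity) (by positivity)

end MajorArc

section CircleMethod

open Complex MeasureTheory

variable {a : ℕ → ℂ} {F : ℂ → ℂ} {A B C ε Δ : ℝ} {L : ℂ}

lemma eventually_exp_neg_div_sq_le_rpow (hε : 0 < ε) (b : ℝ) :
    ∀ᶠ τ : ℝ in 𝓝[>] 0, Real.exp (-(ε / τ ^ 2)) ≤ τ ^ b := by
  have htop : Tendsto (fun τ : ℝ => (τ ^ 2)⁻¹) (𝓝[>] 0) atTop := by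
    simpa only [← inv_pow, Function.comp_def] using
      (tendsto_pow_atTop two_ne_zero).comp tendsto_inv_nhdsGT_zero
  have hlim := (tendsto_rpow_mul_exp_neg_mul_atTop_nhds_zero (b / 2) ε hε).comp htop
  filter_upwards [hlim.eventually_le_const one_pos, self_mem_nhdsWithin] with τ hle hτ
  have hτ₀ : 0 < τ := hτ
  have hrpow : (τ ^ 2)⁻¹ ^ (b / 2) = (τ ^ b)⁻¹ := by
    rw [Real.inv_rpow (by positivity), ← Real.rpow_natCast_mul hτ₀.le]
    congr 2
    push_cast
    ring
  rw [Function.comp_apply, hrpow, neg_mul, ← div_eq_mul_inv] at hle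
  rwa [inv_mul_le_one₀ (Real.rpow_pos_of_pos hτ₀ b)] at hle

lemma norm_saddleIntegrand_le_of_norm_le {τ v : ℝ} (B : ℝ) (hτ : 0 < τ)
    (h : ‖F (exp (-((τ ^ 2 : ℝ) * saddleVar τ v)))‖ ≤ C * Real.exp ((A - ε) / τ ^ 2)) :
    ‖saddleIntegrand F A B τ v‖ ≤ C * Real.exp (-(ε / τ ^ 2)) / τ ^ (2 * B) := by
  have hsaddle : ‖exp ((A / τ ^ 2 : ℝ) * (saddleVar τ v - 2))‖ = Real.exp (-(A / τ ^ 2)) := by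
    rw [norm_exp, re_ofReal_mul, sub_re, saddleVar_re, re_ofNat]
    ring_nf
  rw [saddleIntegrand, norm_div, norm_mul, hsaddle, norm_real,
    Real.norm_of_nonneg (Real.rpow_nonneg hτ.le _)]
  calc _ ≤ C * Real.exp ((A - ε) / τ ^ 2) * Real.exp (-(A / τ ^ 2)) / τ ^ (2 * B) := by gcongr
    _ = C * Real.exp (-(ε / τ ^ 2)) / τ ^ (2 * B) := by
        rw [mul_assoc, ← Real.exp_add]
        ring_nf

theorem exists_norm_saddleIntegrand_le_of_minor (B : ℝ) (hε : 0 < ε)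
    (hminor : ∀ᶠ t : ℝ in 𝓝[>] 0, ∀ θ : ℝ, Δ * t ≤ |θ| → |θ| ≤ Real.pi →
      ‖F (exp (-(t + θ * I)))‖ ≤ C * Real.exp ((A - ε) / t)) :
    ∃ C', ∀ᶠ τ : ℝ in 𝓝[>] 0, ∀ v, Δ ≤ |τ * v| → |v| ≤ Real.pi / τ ^ 3 →
      ‖saddleIntegrand F A B τ v‖ ≤ C' * (1 + v ^ 2)⁻¹ := by
  have hsq : Tendsto (fun τ : ℝ => τ ^ 2) (𝓝[>] 0) (𝓝[>] 0) := by
    refine tendsto_nhdsWithin_iff.mpr ⟨?_, ?_⟩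
    · simpa using ((continuous_pow 2).tendsto (0 : ℝ)).mono_left nhdsWithin_le_nhds
    · filter_upwards [self_mem_nhdsWithin] with τ hτ using pow_pos (Set.mem_Ioi.mp hτ) 2
  refine ⟨C * (1 + Real.pi ^ 2), ?_⟩
  filter_upwards [hsq.eventually hminor, eventually_exp_neg_div_sq_le_rpow hε (6 + 2 * B),
    Ioc_mem_nhdsGT one_pos] with τ hFτ hexp ⟨hτ₀, hτ₁⟩ v hΔv hv
  have hθ : |τ ^ 3 * v| = τ ^ 3 * |v| := by rw [abs_mul, abs_of_pos (pow_pos hτ₀ 3)]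
  have hθ_le : τ ^ 3 * |v| ≤ Real.pi := by rwa [← le_div_iff₀' (pow_pos hτ₀ 3)]
  have hθ_ge : Δ * τ ^ 2 ≤ τ ^ 3 * |v| := by
    rw [abs_mul, abs_of_pos hτ₀] at hΔv
    calc Δ * τ ^ 2 ≤ τ * |v| * τ ^ 2 := by gcongr
      _ = τ ^ 3 * |v| := by ring
  have hF := hFτ (τ ^ 3 * v) (hθ ▸ hθ_ge) (hθ ▸ hθ_le)
  have hC : 0 ≤ C := nonneg_of_mul_nonneg_left ((norm_nonneg _).trans hF) (Real.exp_pos _)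
  have hτv : τ ^ 6 * (1 + v ^ 2) ≤ 1 + Real.pi ^ 2 := by
    have hτ₆ : τ ^ 6 ≤ 1 := pow_le_one₀ hτ₀.le hτ₁
    have hθ_sq : (τ ^ 3 * |v|) ^ 2 ≤ Real.pi ^ 2 := by gcongr
    rw [mul_pow, sq_abs] at hθ_sq
    linarith
  rw [← sq_mul_saddleVar] at hF
  calc _ ≤ C * Real.exp (-(ε / τ ^ 2)) / τ ^ (2 * B) :=
        norm_saddleIntegrand_le_of_norm_le B hτ₀ hF
    _ ≤ C * τ ^ (6 + 2 * B) / τ ^ (2 * B) := by gcongr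
    _ = C * τ ^ 6 := by
        rw [Real.rpow_add hτ₀, ← mul_assoc,
          mul_div_cancel_right₀ _ (Real.rpow_pos_of_pos hτ₀ _).ne']
        norm_cast
    _ ≤ C * (1 + Real.pi ^ 2) * (1 + v ^ 2)⁻¹ := by
        rw [← div_eq_mul_inv, le_div_iff₀ (by positivity), mul_assoc]
        gcongr

theorem exists_norm_saddleIntegrand_le (hA : 0 ≤ A) (hΔ : 0 ≤ Δ) (hε : 0 < ε)
    (hmajor : Tendsto (fun s => F (exp (-s)) * exp (-(A / s)) / s ^ (B : ℂ)) (𝓝[sector Δ] 0) (𝓝 L))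
    (hminor : ∀ᶠ t : ℝ in 𝓝[>] 0, ∀ θ : ℝ, Δ * t ≤ |θ| → |θ| ≤ Real.pi →
      ‖F (exp (-(t + θ * I)))‖ ≤ C * Real.exp ((A - ε) / t)) :
    ∃ C₁ C₂, ∀ᶠ τ : ℝ in 𝓝[>] 0, ∀ v, |v| ≤ Real.pi / τ ^ 3 →
      ‖saddleIntegrand F A B τ v‖ ≤
        |C₁| * Real.exp (-(A / (1 + Δ ^ 2)) * v ^ 2) + |C₂| * (1 + v ^ 2)⁻¹ := by
  obtain ⟨C₁, hC₁⟩ := exists_norm_saddleIntegrand_le_of_major hA hΔ hmajor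
  obtain ⟨C₂, hC₂⟩ := exists_norm_saddleIntegrand_le_of_minor B hε hminor
  refine ⟨C₁, C₂, ?_⟩
  filter_upwards [hC₁, hC₂] with τ hτ₁ hτ₂ v hv
  rcases le_total |τ * v| Δ with hle | hge
  · calc _ ≤ C₁ * Real.exp (-(A / (1 + Δ ^ 2)) * v ^ 2) := hτ₁ v hle
      _ ≤ |C₁| * Real.exp (-(A / (1 + Δ ^ 2)) * v ^ 2) := by gcongr; exact le_abs_self C₁
      _ ≤ _ := le_add_of_nonneg_right (by positivity)
  · calc _ ≤ C₂ * (1 + v ^ 2)⁻¹ := hτ₂ v hge hv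
      _ ≤ |C₂| * (1 + v ^ 2)⁻¹ := by gcongr; exact le_abs_self C₂
      _ ≤ _ := le_add_of_nonneg_left (by positivity)

lemma tendsto_intervalIntegral_of_dominated {ι E : Type*} [NormedAddCommGroup E] [NormedSpace ℝ E]
    {l : Filter ι} [l.IsCountablyGenerated] {f : ι → ℝ → E} {g : ℝ → E} {R : ι → ℝ} {bound : ℝ → ℝ}
    (hR : Tendsto R l atTop) (hf : ∀ᶠ i in l, AEStronglyMeasurable (f i))
    (hle : ∀ᶠ i in l, ∀ v, |v| ≤ R i → ‖f i v‖ ≤ bound v) (hbound : Integrable bound)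
    (hlim : ∀ v, Tendsto (fun i => f i v) l (𝓝 (g v))) :
    Tendsto (fun i => ∫ v in (-R i)..(R i), f i v) l (𝓝 (∫ v, g v)) := by
  have hdct : Tendsto (fun i => ∫ v, (Set.Ioc (-R i) (R i)).indicator (f i) v) l
      (𝓝 (∫ v, g v)) := by
    refine tendsto_integral_filter_of_dominated_convergence _ ?_ ?_ hbound.norm ?_
    · filter_upwards [hf] with i hi using hi.indicator measurableSet_Ioc
    · filter_upwards [hle] with i hi
      refine Eventually.of_forall fun v => ?_
      by_cases hv : v ∈ Set.Ioc (-R i) (R i)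
      · rw [Set.indicator_of_mem hv]
        exact (hi v (abs_le.mpr ⟨hv.1.le, hv.2⟩)).trans (le_abs_self _)
      · rw [Set.indicator_of_notMem hv, norm_zero]
        exact norm_nonneg _
    · refine Eventually.of_forall fun v => (hlim v).congr' ?_
      filter_upwards [hR.eventually_gt_atTop |v|] with i hi
      have hv : v ∈ Set.Ioc (-R i) (R i) := ⟨(abs_lt.mp hi).1, (abs_lt.mp hi).2.le⟩
      exact (Set.indicator_of_mem hv _).symm
  refine hdct.congr' ?_
  filter_upwards [hR.eventually_ge_atTop 0] with i hi
  rw [integral_indicator measurableSet_Ioc, intervalIntegral.integral_of_le (neg_le_self hi)]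

theorem tendsto_integral_saddleIntegrand (hA : 0 < A) (hΔ : 0 < Δ) (hε : 0 < ε)
    (hF : ∀ q, ‖q‖ < 1 → HasSum (fun n => a n * q ^ n) (F q))
    (hmajor : Tendsto (fun s => F (exp (-s)) * exp (-(A / s)) / s ^ (B : ℂ)) (𝓝[sector Δ] 0) (𝓝 L))
    (hminor : ∀ᶠ t : ℝ in 𝓝[>] 0, ∀ θ : ℝ, Δ * t ≤ |θ| → |θ| ≤ Real.pi →
      ‖F (exp (-(t + θ * I)))‖ ≤ C * Real.exp ((A - ε) / t)) :
    Tendsto (fun τ : ℝ => ∫ v in (-(Real.pi / τ ^ 3))..(Real.pi / τ ^ 3),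
      saddleIntegrand F A B τ v) (𝓝[>] 0) (𝓝 (L * (√(Real.pi / A) : ℝ))) := by
  obtain ⟨C₁, C₂, hC⟩ := exists_norm_saddleIntegrand_le hA.le hΔ.le hε hmajor hminor
  have hgauss : ∫ v : ℝ, L * exp (-(A * v ^ 2)) = L * (√(Real.pi / A) : ℝ) := by
    rw [integral_const_mul, ← integral_gaussian, ← integral_complex_ofReal]
    push_cast
    simp only [neg_mul]
  have hbound : Integrable fun v : ℝ =>
      |C₁| * Real.exp (-(A / (1 + Δ ^ 2)) * v ^ 2) + |C₂| * (1 + v ^ 2)⁻¹ :=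
    ((integrable_exp_neg_mul_sq (by positivity)).const_mul _).add
      (integrable_inv_one_add_sq.const_mul _)
  have hradius : Tendsto (fun τ : ℝ => Real.pi / τ ^ 3) (𝓝[>] 0) atTop := by
    simpa only [div_eq_mul_inv, ← inv_pow, Function.comp_def] using
      ((tendsto_pow_atTop three_ne_zero).comp tendsto_inv_nhdsGT_zero).const_mul_atTop Real.pi_pos
  rw [← hgauss]
  refine tendsto_intervalIntegral_of_dominated hradius ?_ hC hbound
    (tendsto_saddleIntegrand hΔ hmajor)
  filter_upwards [self_mem_nhdsWithin] with τ hτ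
  exact (continuous_saddleIntegrand hF A B hτ).aestronglyMeasurable

lemma saddle_normalization {A x τ : ℝ} (B : ℝ) (hτ : 0 < τ) (hx : 0 ≤ x) (hA : x * τ ^ 4 = A) :
    τ ^ (3 : ℕ) * (Real.exp (2 * A / τ ^ 2) * τ ^ (2 * B)) *
      (x ^ ((2 * B + 3) / 4) / Real.exp (2 * √(A * x))) = A ^ ((2 * B + 3) / 4) := by
  have hexp : 2 * A / τ ^ 2 = 2 * √(A * x) := by
    have hsq : A * x = (x * τ ^ 2) ^ 2 := by rw [← hA]; ring
    rw [hsq, Real.sqrt_sq (by positivity), ← hA]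
    field_simp
  have hpow : τ ^ (3 : ℕ) * τ ^ (2 * B) = (τ ^ 4) ^ ((2 * B + 3) / 4) := by
    rw [← Real.rpow_natCast_mul hτ.le, ← Real.rpow_natCast, ← Real.rpow_add hτ]
    congr 1
    push_cast
    ring
  rw [hexp, ← hA, Real.mul_rpow hx (by positivity), ← hpow]
  field_simp

theorem tendsto_coeff_of_major_of_minor (hA : 0 < A) (hΔ : 0 < Δ) (hε : 0 < ε)
    (hF : ∀ q, ‖q‖ < 1 → HasSum (fun n => a n * q ^ n) (F q))
    (hmajor : Tendsto (fun s => F (exp (-s)) * exp (-(A / s)) / s ^ (B : ℂ)) (𝓝[sector Δ] 0) (𝓝 L))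
    (hminor : ∀ᶠ t : ℝ in 𝓝[>] 0, ∀ θ : ℝ, Δ * t ≤ |θ| → |θ| ≤ Real.pi →
      ‖F (exp (-(t + θ * I)))‖ ≤ C * Real.exp ((A - ε) / t)) :
    Tendsto (fun n : ℕ => a n * ((n : ℝ) ^ ((2 * B + 3) / 4) / Real.exp (2 * √(A * n)) : ℝ))
      atTop (𝓝 (L * (A ^ ((2 * B + 1) / 4) / (2 * √Real.pi) : ℝ))) := by
  let τ (n : ℕ) : ℝ := (A / n) ^ (1 / 4 : ℝ)
  have hτ_pos (n : ℕ) (hn : 0 < n) : 0 < τ n := by positivity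
  have hτ_pow (n : ℕ) (hn : 0 < n) : n * τ n ^ 4 = A := by
    have h : τ n ^ 4 = A / n := by
      rw [← Real.rpow_natCast, ← Real.rpow_mul (by positivity)]
      norm_num
    rw [h, mul_div_cancel₀ _ (Nat.cast_ne_zero.mpr hn.ne')]
  have hτ_lim : Tendsto τ atTop (𝓝[>] 0) := by
    refine tendsto_nhdsWithin_iff.mpr ⟨?_, eventually_gt_atTop 0 |>.mono hτ_pos⟩
    have := (tendsto_const_div_atTop_nhds_zero_nat A).rpow_const (p := 1 / 4) (by norm_num)
    rwa [Real.zero_rpow (by norm_num)] at this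
  have hconst : (2 * Real.pi)⁻¹ * A ^ ((2 * B + 3) / 4) * √(Real.pi / A) =
      A ^ ((2 * B + 1) / 4) / (2 * √Real.pi) := by
    have hexp : (2 * B + 3) / 4 = (2 * B + 1) / 4 + 1 / 2 := by ring
    rw [hexp, Real.rpow_add hA, ← Real.sqrt_eq_rpow, Real.sqrt_div Real.pi_pos.le]
    have := Real.sqrt_pos.mpr hA
    have := Real.sqrt_pos.mpr Real.pi_pos
    field_simp
    rw [Real.sq_sqrt Real.pi_pos.le]
  have hlim := ((tendsto_integral_saddleIntegrand hA hΔ hε hF hmajor hminor).comp hτ_lim).const_mul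
    (((2 * Real.pi)⁻¹ * A ^ ((2 * B + 3) / 4) : ℝ) : ℂ)
  rw [mul_left_comm, ← ofReal_mul, hconst] at hlim
  refine hlim.congr' ?_
  filter_upwards [eventually_gt_atTop 0] with n hn
  rw [coeff_eq_integral_saddleIntegrand hF B (hτ_pos n hn) (hτ_pow n hn), mul_right_comm,
    ← ofReal_mul, mul_assoc (2 * Real.pi)⁻¹, mul_assoc (2 * Real.pi)⁻¹,
    saddle_normalization B (hτ_pos n hn) n.cast_nonneg (hτ_pow n hn), Function.comp_apply]

end CircleMethod

/-! ### Asymptotics near the essential singularity at `1` -/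

section EulerFunction

open Complex

variable {s : ℂ} {Δ : ℝ}

lemma I_mul_cpow (hs : 0 < s.re) (b : ℂ) : (I * s) ^ b = I ^ b * s ^ b := by
  have hs₀ : s ≠ 0 := ne_of_apply_ne re hs.ne'
  have harg := abs_lt.mp (abs_arg_lt_pi_div_two_iff.mpr (Or.inl hs))
  rw [cpow_def_of_ne_zero (mul_ne_zero I_ne_zero hs₀), cpow_def_of_ne_zero I_ne_zero,
    cpow_def_of_ne_zero hs₀, ← exp_add, ← add_mul, log_mul I_ne_zero hs₀]
  rw [arg_I]
  constructor <;> linarith [Real.pi_pos, harg.1, harg.2]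

lemma ofReal_mul_cpow_two_inv {r : ℝ} (hr : 0 < r) (hs : s ≠ 0) :
    (r * s) ^ (2⁻¹ : ℂ) = (√r : ℝ) * s ^ (2⁻¹ : ℂ) := by
  rw [ofReal_mul_cpow hr hs, Real.sqrt_eq_rpow, ofReal_cpow hr.le]
  norm_num

lemma eta_eq_exp_mul_eulerFunction {z w : ℂ} (h : 2 * Real.pi * I * z = -w) :
    ModularForm.eta z = exp (-w / 24) * eulerFunction (exp (-w)) := by
  simp only [ModularForm.eta, ModularForm.eta_q, Function.Periodic.qParam, eulerFunction,
    ofReal_one, div_one, ofReal_ofNat, h]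

lemma re_const_div_pos {c : ℝ} (hc : 0 < c) (hs : 0 < s.re) : 0 < (c / s).re := by
  have hs₀ : s ≠ 0 := ne_of_apply_ne re hs.ne'
  rw [div_eq_mul_inv, re_ofReal_mul, inv_re]
  exact mul_pos hc (div_pos hs (normSq_pos.mpr hs₀))

theorem inv_eulerFunction_exp_neg (hs : 0 < s.re) :
    (eulerFunction (exp (-s)))⁻¹ = (s / (2 * Real.pi)) ^ (2⁻¹ : ℂ) *
      exp (Real.pi ^ 2 / (6 * s) - s / 24) *
        (eulerFunction (exp (-((4 * Real.pi ^ 2 : ℝ) / s))))⁻¹ := by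
  have hs₀ : s ≠ 0 := ne_of_apply_ne re hs.ne'
  have hπ : (Real.pi : ℂ) ≠ 0 := ofReal_ne_zero.mpr Real.pi_ne_zero
  have hI : I ^ (2⁻¹ : ℂ) ≠ 0 := by simp
  have hre : 0 < (s / (2 * Real.pi)).re := by
    have h : s / (2 * Real.pi) = s / (2 * Real.pi : ℝ) := by push_cast; rfl
    rw [h, div_ofReal_re]
    positivity
  have hmem : I * (s / (2 * Real.pi)) ∈ UpperHalfPlane.upperHalfPlaneSet := by
    simpa [UpperHalfPlane.upperHalfPlaneSet] using hre
  have heta := ModularForm.eta_comp_eq_csqrt_I_inv hmem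
  simp only [Function.comp, Pi.smul_apply, Pi.mul_apply, smul_eq_mul, Complex.sqrt] at heta
  rw [eta_eq_exp_mul_eulerFunction (w := (4 * Real.pi ^ 2 : ℝ) / s)
      (by push_cast; field_simp; norm_num),
    eta_eq_exp_mul_eulerFunction (w := s) (by field_simp; simp),
    I_mul_cpow hre, mul_assoc, inv_mul_cancel_left₀ hI] at heta
  have hexp : exp (Real.pi ^ 2 / (6 * s) - s / 24) =
      (exp (-((4 * Real.pi ^ 2 : ℝ) / s) / 24))⁻¹ * exp (-s / 24) := by
    rw [← exp_neg, ← exp_add]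
    congr 1
    push_cast
    field_simp
    ring
  have hφ := eulerFunction_ne_zero
    (norm_exp_neg_lt_one (re_const_div_pos (show 0 < 4 * Real.pi ^ 2 by positivity) hs))
  rw [hexp]
  refine inv_eq_of_mul_eq_one_right ?_
  rw [← mul_inv_cancel₀ (mul_ne_zero (exp_ne_zero (-((4 * Real.pi ^ 2 : ℝ) / s) / 24)) hφ), mul_inv]
  linear_combination -(exp (-((4 * Real.pi ^ 2 : ℝ) / s) / 24))⁻¹ *
    (eulerFunction (exp (-((4 * Real.pi ^ 2 : ℝ) / s))))⁻¹ * heta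

lemma tendsto_eulerFunction_zero : Tendsto eulerFunction (𝓝 0) (𝓝 1) := by
  have hcont : ContinuousAt eulerFunction 0 :=
    ModularForm.differentiableOn_tprod_one_sub_pow.continuousOn.continuousAt
      (Metric.ball_mem_nhds 0 one_pos)
  simpa [ContinuousAt, eulerFunction] using hcont

lemma norm_le_of_mem_sector (hs : s ∈ sector Δ) : ‖s‖ ≤ (1 + Δ) * s.re := by
  have h := norm_le_abs_re_add_abs_im s
  rw [abs_of_pos hs.1] at h
  linarith [hs.2]

lemma eventually_mem_sector (Δ : ℝ) : ∀ᶠ s in 𝓝[sector Δ] (0 : ℂ), s ∈ sector Δ :=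
  eventually_mem_nhdsWithin

lemma const_div_norm_le_re_const_div {c : ℝ} (hc : 0 ≤ c) (hΔ : 0 ≤ Δ) (hs : s ∈ sector Δ) :
    c / (1 + Δ) * ‖s‖⁻¹ ≤ (c / s).re := by
  have hnorm : 0 < ‖s‖ := norm_pos_iff.mpr (ne_of_apply_ne re hs.1.ne')
  rw [div_eq_mul_inv (c : ℂ), re_ofReal_mul, inv_re, normSq_eq_norm_sq, div_eq_mul_inv c, mul_assoc]
  refine mul_le_mul_of_nonneg_left ?_ hc
  rw [← mul_inv, le_div_iff₀ (by positivity), inv_mul_le_iff₀ (by positivity), sq,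
    mul_right_comm]
  exact mul_le_mul_of_nonneg_right (norm_le_of_mem_sector hs) hnorm.le

lemma tendsto_exp_neg_const_div_sector {c : ℝ} (hc : 0 < c) (hΔ : 0 ≤ Δ) :
    Tendsto (fun s : ℂ => exp (-(c / s))) (𝓝[sector Δ] 0) (𝓝 0) := by
  have hinv : Tendsto (fun s : ℂ => ‖s‖⁻¹) (𝓝[sector Δ] 0) atTop :=
    tendsto_inv_nhdsGT_zero.comp (tendsto_norm_nhdsNE_zero.mono_left
      (nhdsWithin_mono 0 fun s hs => ne_of_apply_ne re hs.1.ne'))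
  rw [tendsto_zero_iff_norm_tendsto_zero]
  simp only [norm_exp, neg_re]
  refine Real.tendsto_exp_neg_atTop_nhds_zero.comp
    (tendsto_atTop_mono' _ ?_ (hinv.const_mul_atTop (show 0 < c / (1 + Δ) by positivity)))
  filter_upwards [eventually_mem_sector Δ] with s hs
  exact const_div_norm_le_re_const_div hc.le hΔ hs

theorem tendsto_inv_eulerFunction_exp_neg (hΔ : 0 ≤ Δ) :
    Tendsto (fun s : ℂ => (eulerFunction (exp (-s)))⁻¹ * exp (-(Real.pi ^ 2 / (6 * s))) /
      s ^ (2⁻¹ : ℂ)) (𝓝[sector Δ] 0) (𝓝 ((√(2 * Real.pi))⁻¹ : ℝ)) := by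
  have hexp : Tendsto (fun s : ℂ => exp (-s / 24)) (𝓝[sector Δ] 0) (𝓝 1) := by
    have hcont : Continuous fun s : ℂ => exp (-s / 24) := by fun_prop
    simpa using (hcont.tendsto 0).mono_left nhdsWithin_le_nhds
  have hφ := (tendsto_eulerFunction_zero.comp (tendsto_exp_neg_const_div_sector
    (show 0 < 4 * Real.pi ^ 2 by positivity) hΔ)).inv₀ one_ne_zero
  have hlim := (hexp.mul hφ).const_mul (((√(2 * Real.pi))⁻¹ : ℝ) : ℂ)
  rw [inv_one, mul_one, mul_one] at hlim
  refine hlim.congr' ?_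
  filter_upwards [eventually_mem_sector Δ] with s hs
  have hs₀ : s ≠ 0 := ne_of_apply_ne re hs.1.ne'
  have hpow : (s / (2 * Real.pi)) ^ (2⁻¹ : ℂ) = ((√(2 * Real.pi))⁻¹ : ℝ) * s ^ (2⁻¹ : ℂ) := by
    rw [← Real.sqrt_inv, ← ofReal_mul_cpow_two_inv (by positivity) hs₀, div_eq_inv_mul]
    push_cast
    rfl
  have hsplit : exp (Real.pi ^ 2 / (6 * s) - s / 24) * exp (-(Real.pi ^ 2 / (6 * s))) =
      exp (-s / 24) := by
    rw [← exp_add]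
    ring_nf
  have hs' : s ^ (2⁻¹ : ℂ) ≠ 0 := by simp [cpow_eq_zero_iff, hs₀]
  rw [inv_eulerFunction_exp_neg hs.1, hpow, eq_div_iff hs']
  simp only [Function.comp]
  linear_combination -(((√(2 * Real.pi))⁻¹ : ℝ) : ℂ) * s ^ (2⁻¹ : ℂ) *
    (eulerFunction (exp (-((4 * Real.pi ^ 2 : ℝ) / s))))⁻¹ * hsplit

lemma tendsto_two_mul_sector (Δ : ℝ) :
    Tendsto (fun s : ℂ => 2 * s) (𝓝[sector Δ] 0) (𝓝[sector Δ] 0) := by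
  refine tendsto_nhdsWithin_iff.mpr ⟨?_, ?_⟩
  · have hcont : Continuous fun s : ℂ => 2 * s := by fun_prop
    simpa using (hcont.tendsto 0).mono_left nhdsWithin_le_nhds
  · filter_upwards [eventually_mem_sector Δ] with s hs
    have h := hs.2
    simp only [sector, Set.mem_ofPred_eq, mul_re, mul_im, re_ofNat, im_ofNat, zero_mul, sub_zero,
      add_zero, abs_mul, abs_two]
    exact ⟨by linarith [hs.1], by linarith⟩

theorem tendsto_inv_eulerFunction_product (hΔ : 0 ≤ Δ) :
    Tendsto (fun s : ℂ => (eulerFunction (exp (-s)) ^ 2 * eulerFunction (exp (-s) ^ 2))⁻¹ *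
      exp (-((5 * Real.pi ^ 2 / 12 : ℝ) / s)) / s ^ ((3 / 2 : ℝ) : ℂ))
      (𝓝[sector Δ] 0) (𝓝 ((2 * Real.pi * √Real.pi)⁻¹ : ℝ)) := by
  have h := tendsto_inv_eulerFunction_exp_neg hΔ
  have h₂ := h.comp (tendsto_two_mul_sector Δ)
  have hlim := ((h.pow 2).mul h₂).mul_const ((√2 : ℝ) : ℂ)
  have hconst : ((√(2 * Real.pi))⁻¹ : ℝ) ^ 2 * (√(2 * Real.pi))⁻¹ * √2 =
      (2 * Real.pi * √Real.pi)⁻¹ := by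
    rw [inv_pow, Real.sq_sqrt (by positivity), Real.sqrt_mul zero_le_two]
    field_simp
  rw [← hconst]
  push_cast at hlim ⊢
  refine hlim.congr' ?_
  filter_upwards [eventually_mem_sector Δ] with s hs
  have hs₀ : s ≠ 0 := ne_of_apply_ne re hs.1.ne'
  have hpow : s ^ ((3 : ℂ) / 2) = (s ^ (2⁻¹ : ℂ)) ^ 3 := by
    rw [← cpow_nat_mul]
    norm_num
  have hpow₂ : (2 * s) ^ (2⁻¹ : ℂ) = (√2 : ℝ) * s ^ (2⁻¹ : ℂ) := by
    simpa using ofReal_mul_cpow_two_inv two_pos hs₀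
  have hexp : exp (-(5 * Real.pi ^ 2 / 12 / s)) =
      exp (-(Real.pi ^ 2 / (6 * s))) ^ 2 * exp (-(Real.pi ^ 2 / (6 * (2 * s)))) := by
    rw [← exp_nat_mul, ← exp_add]
    congr 1
    push_cast
    field_simp
    ring
  have hq : exp (-(2 * s)) = exp (-s) ^ 2 := by
    rw [← exp_nat_mul]
    congr 1
    push_cast
    ring
  have hsqrt : ((√2 : ℝ) : ℂ) ≠ 0 := by simp
  simp only [Function.comp, hpow, hpow₂, hexp, hq]
  field_simp

end EulerFunction

section FalseTheta

open Complex

variable {q s : ℂ} {Δ : ℝ}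

lemma norm_falseTheta_term_le (hq : ‖q‖ < 1) (k : ℕ) :
    ‖(-1) ^ k * q ^ (k + 1).choose 2‖ ≤ ‖q‖ ^ k := by
  simp only [norm_mul, norm_pow, norm_neg, norm_one, one_pow, one_mul]
  exact pow_le_pow_of_le_one (norm_nonneg _) hq.le (by simp [choose_two_succ])

lemma summable_falseTheta_term (hq : ‖q‖ < 1) :
    Summable fun k : ℕ => (-1) ^ k * q ^ (k + 1).choose 2 :=
  .of_norm_bounded (summable_geometric_of_lt_one (norm_nonneg _) hq) (norm_falseTheta_term_le hq)

lemma norm_falseTheta_le (hq : ‖q‖ < 1) : ‖falseTheta q‖ ≤ (1 - ‖q‖)⁻¹ :=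
  tsum_of_norm_bounded (hasSum_geometric_of_lt_one (norm_nonneg _) hq) (norm_falseTheta_term_le hq)

theorem four_mul_tsum_alternating {R : Type*} [Ring R] [TopologicalSpace R] [IsTopologicalRing R]
    [T2Space R] {a : ℕ → R} (ha : Summable fun k => (-1) ^ k * a k) :
    4 * ∑' k, (-1) ^ k * a k =
      3 * a 0 - a 1 + ∑' k, (-1) ^ k * (a k - 2 * a (k + 1) + a (k + 2)) := by
  have h₁ := (summable_nat_add_iff 1).mpr ha
  have h₂ := (summable_nat_add_iff 2).mpr ha
  have hterm (k : ℕ) : (-1) ^ k * (a k - 2 * a (k + 1) + a (k + 2)) =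
      (-1) ^ k * a k + 2 * ((-1) ^ (k + 1) * a (k + 1)) + (-1) ^ (k + 2) * a (k + 2) := by
    simp only [pow_succ, two_mul]
    noncomm_ring
  have hsplit₁ := ha.tsum_eq_zero_add
  have hsplit₂ := h₁.tsum_eq_zero_add
  simp only [pow_zero, one_mul, zero_add, pow_one, neg_one_mul, add_assoc, one_add_one_eq_two]
    at hsplit₁ hsplit₂
  simp only [hterm]
  rw [(ha.add (h₁.mul_left 2)).tsum_add h₂, ha.tsum_add (h₁.mul_left 2), h₁.tsum_mul_left,
    hsplit₁, hsplit₂]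
  generalize ∑' k, (-1) ^ (k + 2) * a (k + 2) = S
  noncomm_ring

/-- The second difference at `k` of the sequence `q^(k(k+1)/2)`, in the factored form that makes
it small when `q` is close to `1`. -/
def falseThetaDiff (q : ℂ) (k : ℕ) : ℂ :=
  q ^ (k + 1).choose 2 * ((1 - q ^ (k + 1)) ^ 2 - (q ^ (k + 1)) ^ 2 * (1 - q))

lemma falseThetaDiff_eq (q : ℂ) (k : ℕ) :
    q ^ (k + 1).choose 2 - 2 * q ^ (k + 1 + 1).choose 2 + q ^ (k + 2 + 1).choose 2 =
      falseThetaDiff q k := by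
  rw [falseThetaDiff, choose_two_succ (k + 2), choose_two_succ (k + 1)]
  ring

lemma norm_one_sub_exp_neg_le {z : ℂ} (hz : 0 ≤ z.re) : ‖1 - exp (-z)‖ ≤ ‖z‖ := by
  have h := Convex.norm_image_sub_le_of_norm_hasDerivWithin_le (C := 1) (x := -z) (y := 0)
    (fun w _ => (hasDerivAt_exp w).hasDerivWithinAt)
    (fun w (hw : w.re ≤ 0) => by rw [norm_exp]; exact Real.exp_le_one_iff.mpr hw)
    (convex_halfSpace_re_le 0) (show (-z).re ≤ 0 by simpa using hz) (show (0 : ℂ).re ≤ 0 by simp)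
  simpa using h

lemma norm_exp_neg_pow_choose_two_le (hs : 0 < s.re) (hs₁ : s.re ≤ 1) (k : ℕ) :
    ‖exp (-s) ^ (k + 1).choose 2‖ ≤ Real.exp 1 * Real.exp (-(s.re * (k + 1) ^ 2 / 4)) := by
  have hchoose : ((k : ℝ) + 1) ^ 2 / 4 - 1 / 4 ≤ (k + 1).choose 2 := by
    rw [Nat.cast_choose_two]
    push_cast
    nlinarith [sq_nonneg (k : ℝ)]
  rw [norm_pow, norm_exp, neg_re, ← Real.exp_nat_mul, ← Real.exp_add, Real.exp_le_exp]
  nlinarith [mul_le_mul_of_nonneg_right hchoose hs.le]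

lemma norm_falseThetaDiff_factor_le (hs : s ∈ sector Δ) (k : ℕ) :
    ‖(1 - exp (-s) ^ (k + 1)) ^ 2 - (exp (-s) ^ (k + 1)) ^ 2 * (1 - exp (-s))‖ ≤
      ((1 + Δ) * s.re * (k + 1)) ^ 2 + (1 + Δ) * s.re := by
  have hre : 0 ≤ s.re := hs.1.le
  have hnorm := norm_le_of_mem_sector hs
  have hpow : exp (-s) ^ (k + 1) = exp (-(s * (k + 1 : ℝ))) := by
    rw [← exp_nat_mul]
    push_cast
    ring_nf
  have hfirst : ‖1 - exp (-s) ^ (k + 1)‖ ≤ (1 + Δ) * s.re * (k + 1) := by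
    rw [hpow]
    refine (norm_one_sub_exp_neg_le (by rw [re_mul_ofReal]; positivity)).trans ?_
    rw [norm_mul, norm_real, Real.norm_of_nonneg (by positivity)]
    gcongr
  refine (norm_sub_le _ _).trans (add_le_add ?_ ?_)
  · rw [norm_pow]
    gcongr
  · rw [norm_mul, ← pow_mul, norm_pow]
    exact (mul_le_of_le_one_left (norm_nonneg _)
      (pow_le_one₀ (norm_nonneg _) (norm_exp_neg_lt_one hs.1).le)).trans
        ((norm_one_sub_exp_neg_le hre).trans hnorm)

theorem norm_falseThetaDiff_le (hΔ : 0 ≤ Δ) (hs : s ∈ sector Δ) (hs₁ : s.re ≤ 1) (k : ℕ) :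
    ‖falseThetaDiff (exp (-s)) k‖ ≤
      Real.exp 1 * (32 * (1 + Δ) ^ 2 + 4 * (1 + Δ)) * (1 / (k + 1 : ℝ) ^ 2) := by
  have hre : 0 < s.re := hs.1
  set y : ℝ := s.re * (k + 1) ^ 2 with hy
  have hexp : Real.exp (-(y / 4)) * ((1 + Δ) ^ 2 * y ^ 2 + (1 + Δ) * y) ≤
      32 * (1 + Δ) ^ 2 + 4 * (1 + Δ) := by
    have hy₀ : 0 ≤ y / 4 := by positivity
    have hquad := Real.quadratic_le_exp_of_nonneg hy₀
    have hy₁ : y ≤ 4 * Real.exp (y / 4) := by nlinarith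
    have hy₂ : y ^ 2 ≤ 32 * Real.exp (y / 4) := by nlinarith
    rw [Real.exp_neg, inv_mul_le_iff₀ (Real.exp_pos _)]
    calc (1 + Δ) ^ 2 * y ^ 2 + (1 + Δ) * y
        ≤ (1 + Δ) ^ 2 * (32 * Real.exp (y / 4)) + (1 + Δ) * (4 * Real.exp (y / 4)) := by gcongr
      _ = _ := by ring
  rw [falseThetaDiff, norm_mul]
  calc _ ≤ Real.exp 1 * Real.exp (-(y / 4)) *
        (((1 + Δ) * s.re * (k + 1)) ^ 2 + (1 + Δ) * s.re) :=
        mul_le_mul (norm_exp_neg_pow_choose_two_le hre hs₁ k)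
          (norm_falseThetaDiff_factor_le hs k) (norm_nonneg _) (by positivity)
    _ = Real.exp 1 * (Real.exp (-(y / 4)) * ((1 + Δ) ^ 2 * y ^ 2 + (1 + Δ) * y)) *
        (1 / (k + 1 : ℝ) ^ 2) := by
        rw [hy]
        field_simp
    _ ≤ _ := by gcongr

lemma tendsto_exp_neg_sector (Δ : ℝ) :
    Tendsto (fun s : ℂ => exp (-s)) (𝓝[sector Δ] 0) (𝓝 1) := by
  have hcont : Continuous fun s : ℂ => exp (-s) := by fun_prop
  simpa using (hcont.tendsto 0).mono_left nhdsWithin_le_nhds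

lemma tendsto_tsum_falseThetaDiff (hΔ : 0 ≤ Δ) :
    Tendsto (fun s : ℂ => ∑' k : ℕ, (-1) ^ k * falseThetaDiff (exp (-s)) k)
      (𝓝[sector Δ] 0) (𝓝 0) := by
  have hre : ∀ᶠ s in 𝓝[sector Δ] (0 : ℂ), s.re ≤ 1 :=
    ((continuous_re.tendsto 0).mono_left nhdsWithin_le_nhds).eventually
      (ge_mem_nhds (by simp))
  have hbound : Summable fun k : ℕ =>
      Real.exp 1 * (32 * (1 + Δ) ^ 2 + 4 * (1 + Δ)) * (1 / (k + 1 : ℝ) ^ 2) := by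
    have h := (summable_nat_add_iff 1).mpr (Real.summable_one_div_nat_pow.mpr one_lt_two)
    push_cast at h
    exact h.mul_left _
  have hlim : Tendsto (fun s : ℂ => ∑' k : ℕ, (-1) ^ k * falseThetaDiff (exp (-s)) k)
      (𝓝[sector Δ] 0) (𝓝 (∑' _ : ℕ, 0)) := by
    refine tendsto_tsum_of_dominated_convergence hbound (fun k => ?_) ?_
    · have hcont : Continuous fun q : ℂ => (-1) ^ k * falseThetaDiff q k := by
        unfold falseThetaDiff
        fun_prop
      simpa [falseThetaDiff, Function.comp_def] using
        (hcont.tendsto 1).comp (tendsto_exp_neg_sector Δ)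
    · filter_upwards [eventually_mem_sector Δ, hre] with s hs hs₁ k
      simpa using norm_falseThetaDiff_le hΔ hs hs₁ k
  rwa [tsum_zero] at hlim

theorem tendsto_falseTheta_exp_neg (hΔ : 0 ≤ Δ) :
    Tendsto (fun s : ℂ => falseTheta (exp (-s))) (𝓝[sector Δ] 0) (𝓝 (1 / 2)) := by
  have hlim := (((tendsto_exp_neg_sector Δ).const_sub 3).add
    (tendsto_tsum_falseThetaDiff hΔ)).div_const 4
  rw [add_zero, show ((3 - 1) / 4 : ℂ) = 1 / 2 by norm_num] at hlim
  refine hlim.congr' ?_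
  filter_upwards [eventually_mem_sector Δ] with s hs
  have h := four_mul_tsum_alternating (summable_falseTheta_term (norm_exp_neg_lt_one hs.1))
  simp only [falseThetaDiff_eq] at h
  rw [falseTheta, div_eq_iff (by norm_num), mul_comm _ (4 : ℂ), h]
  simp

theorem tendsto_diagonalGF_exp_neg (hΔ : 0 ≤ Δ) :
    Tendsto (fun s : ℂ => diagonalGF (exp (-s)) * exp (-((5 * Real.pi ^ 2 / 12 : ℝ) / s)) /
      s ^ ((3 / 2 : ℝ) : ℂ)) (𝓝[sector Δ] 0) (𝓝 ((4 * Real.pi * √Real.pi)⁻¹ : ℝ)) := by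
  have h := (tendsto_falseTheta_exp_neg hΔ).mul (tendsto_inv_eulerFunction_product hΔ)
  have hconst : (1 / 2 : ℂ) * ((2 * Real.pi * √Real.pi)⁻¹ : ℝ) =
      ((4 * Real.pi * √Real.pi)⁻¹ : ℝ) := by
    push_cast
    ring
  rw [hconst] at h
  refine h.congr fun s => ?_
  rw [diagonalGF]
  ring

end FalseTheta

/-! ### Minor arcs -/

section MinorArcs

open Complex

variable {q z : ℂ} {t θ : ℝ}

/-- In the Taylor series of `-log (1 - z)` and `-log (1 - ‖z‖)`, the real part of each term of the
first is at most the corresponding term of the second; keep the gain from the linear terms only. -/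
lemma norm_inv_one_sub_le (hz : ‖z‖ < 1) :
    ‖(1 - z)⁻¹‖ ≤ (1 - ‖z‖)⁻¹ * Real.exp (z.re - ‖z‖) := by
  have hpos : 0 < 1 - ‖z‖ := sub_pos.mpr hz
  have hpos' : 0 < ‖1 - z‖ := norm_pos_iff.mpr (one_sub_ne_zero_of_norm_lt_one hz)
  have hlog := hasSum_re (hasSum_taylorSeries_neg_log hz)
  have hlog' := hasSum_re (hasSum_taylorSeries_neg_log (z := ‖z‖) (by simpa using hz))
  have hterm (n : ℕ) : 0 ≤ ((‖z‖ : ℂ) ^ n / n).re - (z ^ n / n).re := by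
    have hnorm : ((‖z‖ : ℂ) ^ n / n).re = ‖z ^ n / n‖ := by
      rw [← ofReal_pow, ← ofReal_natCast, ← ofReal_div, ofReal_re]
      simp
    rw [hnorm, sub_nonneg]
    exact re_le_norm _
  have hlinear := le_hasSum (hlog'.sub hlog) 1 fun n _ => hterm n
  have hreal : (log (1 - (‖z‖ : ℂ))).re = Real.log (1 - ‖z‖) := by
    rw [log_re, ← ofReal_one, ← ofReal_sub, norm_real, Real.norm_of_nonneg hpos.le]
  simp only [pow_one, Nat.cast_one, div_one, neg_re, hreal, log_re, ofReal_re] at hlinear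
  rw [norm_inv, ← Real.exp_log hpos', ← Real.exp_log hpos, ← Real.exp_neg, ← Real.exp_neg,
    ← Real.exp_add, Real.exp_le_exp]
  linarith

lemma norm_inv_qPochhammer_self_le (hq : ‖q‖ < 1) (n : ℕ) :
    ‖(qPochhammer q q n)⁻¹‖ ≤ ‖(qPochhammer ‖q‖ ‖q‖ n)⁻¹‖ *
      Real.exp (∑ i ∈ range n, ((q ^ (i + 1)).re - ‖q‖ ^ (i + 1))) := by
  induction n with
  | zero => simp
  | succ n ih =>
    have hpow : ‖q ^ (n + 1)‖ < 1 := norm_pow_lt_one hq n.succ_ne_zero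
    have hreal : ‖(1 - (‖q‖ : ℂ) ^ (n + 1))⁻¹‖ = (1 - ‖q ^ (n + 1)‖)⁻¹ := by
      rw [norm_inv, ← ofReal_pow, ← ofReal_one, ← ofReal_sub, norm_real, norm_pow,
        Real.norm_of_nonneg (by rw [← norm_pow]; linarith)]
    rw [qPochhammer_succ, qPochhammer_succ, ← pow_succ', ← pow_succ', mul_inv, mul_inv, norm_mul,
      norm_mul, hreal, sum_range_succ, Real.exp_add, mul_mul_mul_comm, ← norm_pow]
    exact mul_le_mul ih (norm_inv_one_sub_le hpow) (norm_nonneg _) (by positivity)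

theorem norm_inv_eulerFunction_le (hq : ‖q‖ < 1) :
    ‖(eulerFunction q)⁻¹‖ ≤ ‖(eulerFunction ‖q‖)⁻¹‖ *
      Real.exp (‖q‖ / ‖1 - q‖ - ‖q‖ / (1 - ‖q‖)) := by
  have hr : ‖(‖q‖ : ℂ)‖ < 1 := by simpa using hq
  have hφ := ((tendsto_qPochhammer_self hq).inv₀ (eulerFunction_ne_zero hq)).norm
  have hφ' := ((tendsto_qPochhammer_self hr).inv₀ (eulerFunction_ne_zero hr)).norm
  have hgeom := (hasSum_re ((hasSum_geometric_of_norm_lt_one hq).mul_left q)).tendsto_sum_nat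
  have hgeom' := ((hasSum_geometric_of_lt_one (norm_nonneg _) hq).mul_left ‖q‖).tendsto_sum_nat
  have hexp := (Real.continuous_exp.tendsto _).comp (hgeom.sub hgeom')
  have hle := le_of_tendsto_of_tendsto' hφ (hφ'.mul hexp) fun n => by
    simpa only [Function.comp, ← sum_sub_distrib, ← pow_succ'] using
      norm_inv_qPochhammer_self_le hq n
  refine hle.trans ?_
  rw [← div_eq_mul_inv, ← div_eq_mul_inv]
  gcongr
  exact (re_le_norm _).trans_eq (norm_div _ _)

lemma norm_inv_eulerFunction_le_norm (hq : ‖q‖ < 1) :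
    ‖(eulerFunction q)⁻¹‖ ≤ ‖(eulerFunction ‖q‖)⁻¹‖ := by
  refine (norm_inv_eulerFunction_le hq).trans
    (mul_le_of_le_one_right (norm_nonneg _) (Real.exp_le_one_iff.mpr ?_))
  have h : 1 - ‖q‖ ≤ ‖1 - q‖ := by simpa using norm_sub_norm_le (1 : ℂ) q
  exact sub_nonpos.mpr (div_le_div_of_nonneg_left (norm_nonneg q) (sub_pos.mpr hq) h)

theorem norm_inv_eulerFunction_product_le (hq : ‖q‖ < 1) :
    ‖(eulerFunction q ^ 2 * eulerFunction (q ^ 2))⁻¹‖ ≤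
      ‖(eulerFunction ‖q‖ ^ 2 * eulerFunction (‖q‖ ^ 2))⁻¹‖ *
        Real.exp (2 * (‖q‖ / ‖1 - q‖ - ‖q‖ / (1 - ‖q‖))) := by
  have h₂ := norm_inv_eulerFunction_le_norm (norm_pow_lt_one hq two_ne_zero)
  rw [norm_pow, ofReal_pow] at h₂
  have h := mul_le_mul (pow_le_pow_left₀ (norm_nonneg _) (norm_inv_eulerFunction_le hq) 2) h₂
    (norm_nonneg _) (by positivity)
  rw [mul_pow, ← Real.exp_nat_mul, mul_right_comm] at h
  simpa only [mul_inv, norm_mul, ← inv_pow, norm_pow, Nat.cast_ofNat] using h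

lemma exists_eventually_norm_inv_eulerFunction_product_le :
    ∃ C : ℝ, ∀ᶠ t : ℝ in 𝓝[>] 0,
      ‖(eulerFunction (exp (-t)) ^ 2 * eulerFunction (exp (-t) ^ 2))⁻¹‖ ≤
        C * t * Real.exp (5 * Real.pi ^ 2 / 12 / t) := by
  have hmem : Tendsto (fun t : ℝ => (t : ℂ)) (𝓝[>] 0) (𝓝[sector 0] 0) := by
    refine tendsto_nhdsWithin_iff.mpr
      ⟨(continuous_ofReal.tendsto' 0 0 ofReal_zero).mono_left nhdsWithin_le_nhds, ?_⟩
    filter_upwards [self_mem_nhdsWithin] with t ht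
    exact ⟨ht, by simp⟩
  obtain ⟨C, hC⟩ := (((tendsto_inv_eulerFunction_product le_rfl).comp hmem).norm).isBoundedUnder_le
  refine ⟨C, ?_⟩
  filter_upwards [eventually_map.mp hC, Ioo_mem_nhdsGT one_pos] with t hbound ⟨ht₀, ht₁⟩
  have hC₀ : 0 ≤ C := (norm_nonneg _).trans hbound
  have hpow : t ^ (3 / 2 : ℝ) ≤ t := by
    simpa using Real.rpow_le_rpow_of_exponent_ge ht₀ ht₁.le (show (1 : ℝ) ≤ 3 / 2 by norm_num)
  rw [Function.comp, norm_div, norm_mul, norm_exp, ← ofReal_div, neg_re, ofReal_re,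
    ← ofReal_cpow ht₀.le, norm_real, Real.norm_of_nonneg (by positivity),
    div_le_iff₀ (by positivity), Real.exp_neg, ← div_eq_mul_inv,
    div_le_iff₀ (Real.exp_pos _)] at hbound
  refine hbound.trans ?_
  gcongr

lemma norm_one_sub_ofReal_mul_sq (r : ℝ) (hz : ‖z‖ = 1) :
    ‖1 - r * z‖ ^ 2 = (1 - r) ^ 2 + r * ‖1 - z‖ ^ 2 := by
  have h : z.re * z.re + z.im * z.im = 1 := by
    rw [← normSq_apply, normSq_eq_norm_sq, hz, one_pow]
  simp only [← normSq_eq_norm_sq, normSq_apply, sub_re, sub_im, one_re, one_im, re_ofReal_mul,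
    im_ofReal_mul]
  linear_combination (r ^ 2 - r) * h

lemma two_div_pi_mul_abs_le_norm_one_sub_exp (hθ : |θ| ≤ Real.pi) :
    2 / Real.pi * |θ| ≤ ‖1 - exp (θ * I)‖ := by
  have h := Real.mul_abs_le_abs_sin (x := θ / 2) (by rw [abs_div, abs_two]; linarith)
  rw [norm_sub_rev, mul_comm (θ : ℂ), norm_exp_I_mul_ofReal_sub_one, norm_mul, Real.norm_two,
    Real.norm_eq_abs]
  rw [abs_div, abs_two] at h
  linarith

lemma one_sub_exp_neg_mul_le_norm_one_sub (ht : 0 < t) (ht₁ : t ≤ 1 / 10) (htθ : t ≤ |θ|)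
    (hθ : |θ| ≤ Real.pi) :
    11 / 10 * (1 - Real.exp (-t)) ≤ ‖1 - exp (-(t + θ * I))‖ := by
  have hr : 1 - t ≤ Real.exp (-t) := by linarith [Real.add_one_le_exp (-t)]
  have hr₁ : Real.exp (-t) < 1 := Real.exp_lt_one_iff.mpr (by linarith)
  have hq : exp (-(t + θ * I)) = Real.exp (-t) * exp ((-θ : ℝ) * I) := by
    rw [ofReal_exp, ← exp_add]
    push_cast
    ring_nf
  have hchord : 4 / 7 * t ≤ ‖1 - exp ((-θ : ℝ) * I)‖ := by
    refine le_trans ?_ (two_div_pi_mul_abs_le_norm_one_sub_exp (by rwa [abs_neg]))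
    rw [abs_neg]
    refine mul_le_mul ?_ htθ ht.le (by positivity)
    rw [div_le_div_iff₀ (by norm_num) Real.pi_pos]
    linarith [Real.pi_lt_d2]
  refine le_of_sq_le_sq ?_ (norm_nonneg _)
  rw [hq, norm_one_sub_ofReal_mul_sq _ (norm_exp_ofReal_mul_I _)]
  calc (11 / 10 * (1 - Real.exp (-t))) ^ 2
      ≤ (1 - Real.exp (-t)) ^ 2 + 9 / 10 * (4 / 7 * t) ^ 2 := by nlinarith
    _ ≤ _ := by
      gcongr
      linarith

lemma div_norm_one_sub_sub_le (ht : 0 < t) (ht₁ : t ≤ 1 / 10) (htθ : t ≤ |θ|)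
    (hθ : |θ| ≤ Real.pi) :
    Real.exp (-t) / ‖1 - exp (-(t + θ * I))‖ - Real.exp (-t) / (1 - Real.exp (-t)) ≤
      -(1 / 22 / t) := by
  have hr₁ : 0 < 1 - Real.exp (-t) := sub_pos.mpr (Real.exp_lt_one_iff.mpr (by linarith))
  have hmajor : 1 / (2 * t) ≤ Real.exp (-t) / (1 - Real.exp (-t)) := by
    have hexp := (le_abs_self _).trans (Real.abs_exp_sub_one_le (x := t)
      (by rw [abs_of_pos ht]; linarith))
    rw [abs_of_pos ht] at hexp
    rw [div_le_div_iff₀ (by positivity) hr₁, one_mul]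
    calc 1 - Real.exp (-t) = Real.exp (-t) * (Real.exp t - 1) := by
          rw [mul_sub, ← Real.exp_add, neg_add_cancel, Real.exp_zero, mul_one]
      _ ≤ Real.exp (-t) * (2 * t) := by gcongr
  have hminor : Real.exp (-t) / ‖1 - exp (-(t + θ * I))‖ ≤
      10 / 11 * (Real.exp (-t) / (1 - Real.exp (-t))) := by
    calc _ ≤ Real.exp (-t) / (11 / 10 * (1 - Real.exp (-t))) := by
          gcongr
          exact one_sub_exp_neg_mul_le_norm_one_sub ht ht₁ htθ hθ
      _ = _ := by field_simp
  calc _ ≤ -(1 / 11) * (Real.exp (-t) / (1 - Real.exp (-t))) := by linarith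
    _ ≤ -(1 / 11) * (1 / (2 * t)) := mul_le_mul_of_nonpos_left hmajor (by norm_num)
    _ = _ := by
      field_simp
      norm_num

lemma inv_one_sub_exp_neg_le (ht : 0 < t) (ht₁ : t ≤ 1 / 2) :
    (1 - Real.exp (-t))⁻¹ ≤ 2 / t := by
  have hlower : 1 - t ≤ Real.exp (-t) := by linarith [Real.add_one_le_exp (-t)]
  have hupper : Real.exp (-t) * (t + 1) ≤ 1 := by
    calc _ ≤ Real.exp (-t) * Real.exp t := by gcongr; exact Real.add_one_le_exp t
      _ = 1 := by rw [← Real.exp_add, neg_add_cancel, Real.exp_zero]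
  rw [← inv_div]
  gcongr
  nlinarith

theorem exists_eventually_norm_diagonalGF_le :
    ∃ C : ℝ, ∀ᶠ t : ℝ in 𝓝[>] 0, ∀ θ : ℝ, t ≤ |θ| → |θ| ≤ Real.pi →
      ‖diagonalGF (exp (-(t + θ * I)))‖ ≤
        C * Real.exp ((5 * Real.pi ^ 2 / 12 - 1 / 11) / t) := by
  obtain ⟨C, hC⟩ := exists_eventually_norm_inv_eulerFunction_product_le
  refine ⟨2 * C, ?_⟩
  filter_upwards [hC, Ioo_mem_nhdsGT (show (0 : ℝ) < 1 / 10 by norm_num)]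
    with t hproduct ⟨ht, ht₁⟩ θ htθ hθ
  have hnorm : ‖exp (-(t + θ * I))‖ = Real.exp (-t) := by simp [norm_exp]
  have hq : ‖exp (-(t + θ * I))‖ < 1 := norm_exp_neg_lt_one (by simpa using ht)
  have hexp := div_norm_one_sub_sub_le ht ht₁.le htθ hθ
  have hφ := norm_inv_eulerFunction_product_le hq
  rw [hnorm, ofReal_exp, ofReal_neg] at hφ
  rw [diagonalGF, div_eq_mul_inv, norm_mul]
  calc _ ≤ (2 / t) * ((C * t * Real.exp (5 * Real.pi ^ 2 / 12 / t)) *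
          Real.exp (2 * -(1 / 22 / t))) := by
        refine mul_le_mul ?_ (hφ.trans ?_) (norm_nonneg _) (by positivity)
        · refine (norm_falseTheta_le hq).trans ?_
          rw [hnorm]
          exact inv_one_sub_exp_neg_le ht (by linarith)
        · exact mul_le_mul hproduct (by gcongr) (Real.exp_pos _).le
            ((norm_nonneg _).trans hproduct)
    _ = 2 * C * (Real.exp (5 * Real.pi ^ 2 / 12 / t) * Real.exp (2 * -(1 / 22 / t))) := by
        field_simp
    _ = _ := by
        rw [← Real.exp_add]
        ring_nf

end MinorArcs

section DiagonalAsymptotic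

open Complex

theorem tendsto_bipartitePi_diag_mul :
    Tendsto (fun n : ℕ => (bipartitePi n n : ℝ) *
      ((n : ℝ) ^ (3 / 2 : ℝ) / Real.exp (2 * √(5 * Real.pi ^ 2 / 12 * n)))) atTop
      (𝓝 (5 / 96)) := by
  obtain ⟨C, hminor⟩ := exists_eventually_norm_diagonalGF_le
  have h := tendsto_coeff_of_major_of_minor (B := 3 / 2) (by positivity) one_pos
    (show (0 : ℝ) < 1 / 11 by norm_num) (fun q hq => hasSum_bipartitePi_diagonal hq)
    (tendsto_diagonalGF_exp_neg zero_le_one) (by simpa only [one_mul] using hminor)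
  have hexponent : (2 * (3 / 2) + 3) / 4 = (3 / 2 : ℝ) := by norm_num
  have hlimit : ((4 * Real.pi * √Real.pi)⁻¹ * ((5 * Real.pi ^ 2 / 12) ^
      ((2 * (3 / 2) + 1) / 4 : ℝ) / (2 * √Real.pi)) : ℝ) = 5 / 96 := by
    have hsqrt := Real.mul_self_sqrt Real.pi_pos.le
    norm_num
    field_simp
    nlinarith
  rw [hexponent, ← ofReal_mul, hlimit] at h
  exact_mod_cast (continuous_re.tendsto _).comp h

end DiagonalAsymptotic

open Real Filter in
/-- `π(n,n) ~ (5/96) · e^{c√n}/n^{3/2}` as `n → ∞`, with `c = 2π√(5/12)`. -/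
theorem bipartitePi_diag_asymptotic (c : ℝ) (hc : c = 2 * π * Real.sqrt (5 / 12)) :
    Tendsto (fun n : ℕ =>
        (bipartitePi n n : ℝ) /
          (5 / (2 ^ 5 * 3) * Real.exp (c * Real.sqrt n) / (n : ℝ) ^ ((3 : ℝ) / 2)))
      atTop (nhds 1) := by
  have hexponent (n : ℕ) : 2 * √(5 * π ^ 2 / 12 * n) = c * √n := by
    rw [hc, Real.sqrt_mul (by positivity), show 5 * π ^ 2 / 12 = π ^ 2 * (5 / 12) by ring,
      Real.sqrt_mul (by positivity), Real.sqrt_sq pi_pos.le]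
    ring
  have h := tendsto_bipartitePi_diag_mul.div_const (5 / 96)
  rw [div_self (by norm_num)] at h
  refine h.congr fun n => ?_
  rw [hexponent]
  field_simp
  ring
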